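/- arXiv:math/0605683 — 6 statements merged into one kernel-verified Lean document; each statement's English description precedes it below -/
import Mathlib

section
/- Let O be a commutative ring and π ∈ O. Let (I, ≤) be a nonempty directed set and (R_i)_{i ∈ I} a directed system of O-algebras with O-algebra transition maps, such that each R_i is π-adically complete and separated and π is a nonzerodivisor on each R_i (with respect to the image of π). Let R_∞ = colim_{i ∈ I} R_i and let R̂_∞ denote the π-adic completion of R_∞. Fix i₀ ∈ I and let B, B' be two R_{i₀}-algebras, each finitely generated and projective as an R_{i₀}-module, with B[1/π] and B'[1/π] étale over R_{i₀}[1/π]. Then the canonical map colim_{i ≥ i₀} Hom_{R_i-alg}(R_i ⊗_{R_{i₀}} B, R_i ⊗_{R_{i₀}} B') → Hom_{R̂_∞-alg}(R̂_∞ ⊗_{R_{i₀}} B, R̂_∞ ⊗_{R_{i₀}} B') is bijective. -/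
/-!
Write `A` for the base ring, `p` for the image of `π` in it, and let `B` be a finite projective
`A`-algebra that is étale after inverting `p`.  The separability idempotent of `B[1/p]` over
`A[1/p]`, with denominators cleared, is an element `e` of `B ⊗ B` that is killed by all
`1 ⊗ b - b ⊗ 1` and has product `p ^ N` (`exists_isSepElt`).  The theorem follows from two
consequences of the existence of `e`, for algebra maps from `B` to a `p`-torsion-free and
`p`-adically complete `A`-algebra `D`.

* Rigidity (`algHom_eq_of_sepElt`, `algHom_eq_of_congr`): `φ₁` and `φ₂` are equal as soon as
  `(φ₁ ⊗ φ₂) e` is congruent to `p ^ N` modulo `p ^ (N + 1)`, in particular if `φ₁` and `φ₂` agree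
  modulo `p ^ (N + 1)`.
* Approximation (`newton_step`, `exists_algHom`): a linear map that is multiplicative modulo
  `p ^ n`, with `n > 2 N`, is congruent modulo `p ^ (n - N)` to an algebra map.  The failure of
  multiplicativity is a Hochschild cocycle, `e` exhibits `p ^ N` times it as a coboundary up to
  quadratically small terms, and Newton iteration converges.

The completion of the colimit is described through the `R i` by two properties
(`IsApproxColim`): its elements are approximated by elements of the `R i`, and an element of `R i`
becomes divisible by `p ^ n` in the completion only if it does so in some `R j`.  Taking
coordinates with respect to a dual basis, this description and completeness pass to the tensor
products with a finite projective module such as `B'`.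

For surjectivity, a map `ψ` from `B` into the tensor product of the completion with `B'` is
approximated by a linear map to a finite level.  That map is approximately multiplicative at a
later level, where it is corrected to an algebra map; the image of the latter is `ψ` by rigidity
(`exists_comp_eq`).  For injectivity, if `φ₁` and `φ₂` agree after completion, then
`(φ₁ ⊗ φ₂) e` has image `p ^ N` there, so that rigidity applies at a later level
(`exists_comp_eq_of_comp_eq`).
-/

open scoped TensorProduct

universe u u' v w

/-! ### Powers of `p` and completeness -/

/-- The submodule `p ^ n M` of an `A`-module `M`. -/
def piPow {A : Type*} [CommRing A] (p : A) (M : Type*) [AddCommGroup M] [Module A M] (n : ℕ) :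
    Submodule A M :=
  LinearMap.range (LinearMap.lsmul A M (p ^ n))

/-- `M` is `p`-torsion-free and `p`-adically complete and separated, phrased with elements.
Only consecutive terms of a Cauchy sequence are compared. -/
structure RegComplete {A : Type*} [CommRing A] (p : A) (M : Type*) [AddCommGroup M]
    [Module A M] : Prop where
  reg : ∀ x : M, p • x = 0 → x = 0
  haus : ∀ x : M, (∀ n, x ∈ piPow p M n) → x = 0
  prec : ∀ s : ℕ → M, (∀ n, s (n + 1) - s n ∈ piPow p M n) →
    ∃ l, ∀ n, l - s n ∈ piPow p M n

section Module

variable {A : Type*} [CommRing A] {p : A}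
variable {M : Type*} [AddCommGroup M] [Module A M] {M' : Type*} [AddCommGroup M'] [Module A M']

lemma mem_piPow {n : ℕ} {x : M} : x ∈ piPow p M n ↔ ∃ y, x = p ^ n • y := by
  simp only [piPow, LinearMap.mem_range, LinearMap.lsmul_apply, eq_comm]

lemma smul_mem_piPow (n : ℕ) (y : M) : p ^ n • y ∈ piPow p M n := mem_piPow.2 ⟨y, rfl⟩

lemma piPow_zero (x : M) : x ∈ piPow p M 0 := mem_piPow.2 ⟨x, by simp⟩

lemma piPow_anti {m n : ℕ} (h : m ≤ n) {x : M} (hx : x ∈ piPow p M n) : x ∈ piPow p M m := by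
  obtain ⟨y, rfl⟩ := mem_piPow.1 hx
  obtain ⟨k, rfl⟩ := Nat.exists_eq_add_of_le h
  exact mem_piPow.2 ⟨p ^ k • y, by rw [pow_add, mul_smul]⟩

lemma map_mem_piPow (ℓ : M →ₗ[A] M') {n : ℕ} {x : M} (hx : x ∈ piPow p M n) :
    ℓ x ∈ piPow p M' n := by
  obtain ⟨y, rfl⟩ := mem_piPow.1 hx
  exact mem_piPow.2 ⟨ℓ y, by simp⟩

lemma smul_pow_mem_piPow {m : ℕ} (k : ℕ) {x : M} (hx : x ∈ piPow p M m) :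
    p ^ k • x ∈ piPow p M (k + m) := by
  obtain ⟨y, rfl⟩ := mem_piPow.1 hx
  exact mem_piPow.2 ⟨y, by rw [pow_add, mul_smul]⟩

lemma mul_mem_piPow {D : Type*} [CommRing D] [Algebra A D] {m n : ℕ} {x y : D}
    (hx : x ∈ piPow p D m) (hy : y ∈ piPow p D n) : x * y ∈ piPow p D (m + n) := by
  obtain ⟨x, rfl⟩ := mem_piPow.1 hx
  obtain ⟨y, rfl⟩ := mem_piPow.1 hy
  exact mem_piPow.2 ⟨x * y, by rw [smul_mul_smul_comm, pow_add]⟩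

lemma mul_mem_piPow_left {D : Type*} [CommRing D] [Algebra A D] {n : ℕ} (x : D) {y : D}
    (hy : y ∈ piPow p D n) : x * y ∈ piPow p D n := by
  simpa using mul_mem_piPow (piPow_zero (p := p) x) hy

lemma mul_mem_piPow_right {D : Type*} [CommRing D] [Algebra A D] {n : ℕ} {x : D} (y : D)
    (hx : x ∈ piPow p D n) : x * y ∈ piPow p D n := by
  simpa using mul_mem_piPow hx (piPow_zero (p := p) y)

lemma pow_smul_eq_zero (hreg : ∀ x : M, p • x = 0 → x = 0) (n : ℕ) (x : M)
    (h : p ^ n • x = 0) : x = 0 := by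
  induction n with
  | zero => simpa using h
  | succ n ih =>
    rw [pow_succ', mul_smul] at h
    exact ih (hreg _ h)

lemma mem_piPow_of_smul (hreg : ∀ x : M, p • x = 0 → x = 0) (k m : ℕ) (x : M)
    (h : p ^ k • x ∈ piPow p M (k + m)) : x ∈ piPow p M m := by
  obtain ⟨y, hy⟩ := mem_piPow.1 h
  refine mem_piPow.2 ⟨y, sub_eq_zero.1 (pow_smul_eq_zero hreg k _ ?_)⟩
  rw [smul_sub, hy, pow_add, mul_smul, sub_self]

/-- Over a `p`-torsion-free target, a linear map with values in `p ^ n M` can be divided by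
`p ^ n`. -/
lemma exists_smul_linearMap (hreg : ∀ x : M, p • x = 0 → x = 0) (n : ℕ) (ℓ : M' →ₗ[A] M)
    (h : ∀ x, ℓ x ∈ piPow p M n) : ∃ ℓ' : M' →ₗ[A] M, ∀ x, ℓ x = p ^ n • ℓ' x := by
  have hinj : Function.Injective (LinearMap.lsmul A M (p ^ n)) :=
    (injective_iff_map_eq_zero _).2 fun x hx ↦ pow_smul_eq_zero hreg n x hx
  let E := LinearEquiv.ofInjective _ hinj
  refine ⟨E.symm.toLinearMap ∘ₗ ℓ.codRestrict _ h, fun x ↦ ?_⟩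
  have := congrArg Subtype.val (E.apply_symm_apply (ℓ.codRestrict _ h x))
  exact this.symm

/-- Being `p`-torsion-free and complete passes to direct summands of finite powers, here given
by coordinate maps `c` and inclusions `r` with `∑ r k ∘ c k = id`. -/
lemma RegComplete.of_coordinates (hM : RegComplete p M) {d : ℕ} (c : Fin d → M' →ₗ[A] M)
    (r : Fin d → M →ₗ[A] M') (h : ∀ x, ∑ k, r k (c k x) = x) : RegComplete p M' where
  reg x hx := by
    rw [← h x]
    refine Finset.sum_eq_zero fun k _ ↦ ?_
    rw [hM.reg (c k x) (by rw [← map_smul, hx, map_zero]), map_zero]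
  haus x hx := by
    rw [← h x]
    refine Finset.sum_eq_zero fun k _ ↦ ?_
    rw [hM.haus (c k x) (fun n ↦ map_mem_piPow _ (hx n)), map_zero]
  prec s hs := by
    have (k : Fin d) := hM.prec (fun n ↦ c k (s n)) fun n ↦ by
      rw [← map_sub]; exact map_mem_piPow _ (hs n)
    choose l hl using this
    refine ⟨∑ k, r k (l k), fun n ↦ ?_⟩
    rw [← h (s n), ← Finset.sum_sub_distrib]
    refine Submodule.sum_mem _ fun k _ ↦ ?_
    rw [← map_sub]
    exact map_mem_piPow _ (hl k n)

end Module

/-! ### Rigidity and Newton iteration -/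

section Algebra

variable {A : Type*} [CommRing A] {p : A}
variable {D : Type*} [CommRing D] [Algebra A D]

/-- An element congruent to `1` modulo `p` can be cancelled modulo every power of `p`. -/
lemma mem_piPow_of_mul {u x : D} (hu : u - 1 ∈ piPow p D 1) (m : ℕ)
    (h : x * u ∈ piPow p D m) : x ∈ piPow p D m := by
  suffices H : ∀ k ≤ m, x ∈ piPow p D k from H m le_rfl
  intro k
  induction k with
  | zero => exact fun _ ↦ piPow_zero x
  | succ k ih =>
    intro hk
    have h1 : x = x * u - x * (u - 1) := by ring
    rw [h1]
    exact sub_mem (piPow_anti hk h) (mul_mem_piPow (ih (by omega)) hu)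

lemma eq_zero_of_mul (hD : RegComplete p D) {u x : D} (hu : u - 1 ∈ piPow p D 1)
    (h : x * u = 0) : x = 0 :=
  hD.haus x fun n ↦ mem_piPow_of_mul hu n (h ▸ zero_mem _)

variable {B : Type*} [CommRing B] [Algebra A B]

/-- `e` is a separability element of `B` over `A` up to the factor `p ^ N`: it is killed by the
kernel of multiplication `B ⊗ B → B` and its product is `p ^ N`. -/
structure IsSepElt (p : A) (N : ℕ) (e : B ⊗[A] B) : Prop where
  comm : ∀ b : B, ((1 : B) ⊗ₜ[A] b - b ⊗ₜ[A] (1 : B)) * e = 0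
  mul : Algebra.TensorProduct.lmul' A e = algebraMap A B (p ^ N)

lemma lift_comp_apply {D' : Type*} [CommRing D'] [Algebra A D'] (V : D →ₐ[A] D')
    (φ₁ φ₂ : B →ₐ[A] D) (t : B ⊗[A] B) :
    Algebra.TensorProduct.lift (V.comp φ₁) (V.comp φ₂) (fun _ _ ↦ Commute.all _ _) t =
      V (Algebra.TensorProduct.lift φ₁ φ₂ (fun _ _ ↦ Commute.all _ _) t) := by
  induction t with
  | zero => simp
  | tmul a b => simp
  | add x y hx hy => simp only [map_add, hx, hy]

lemma lift_self_apply (φ : B →ₐ[A] D) (t : B ⊗[A] B) :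
    Algebra.TensorProduct.lift φ φ (fun _ _ ↦ Commute.all _ _) t =
      φ (Algebra.TensorProduct.lmul' A t) := by
  induction t with
  | zero => simp
  | tmul a b => simp
  | add x y hx hy => simp only [map_add, hx, hy]

/-- The image `ε` of `e` under `φ₁ ⊗ φ₂` kills every `φ₁ b - φ₂ b`.  If `ε` is congruent to `p ^ N`
modulo `p ^ (N + 1)`, it can be cancelled, so `φ₁ = φ₂`. -/
lemma algHom_eq_of_sepElt (hD : RegComplete p D) {N : ℕ} {e : B ⊗[A] B} (he : IsSepElt p N e)
    (φ₁ φ₂ : B →ₐ[A] D)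
    (h : Algebra.TensorProduct.lift φ₁ φ₂ (fun _ _ ↦ Commute.all _ _) e
      - algebraMap A D (p ^ N) ∈ piPow p D (N + 1)) : φ₁ = φ₂ := by
  ext b
  set ε := Algebra.TensorProduct.lift φ₁ φ₂ (fun _ _ ↦ Commute.all _ _) e
  have h1 : (φ₂ b - φ₁ b) * ε = 0 := by
    have := congrArg (Algebra.TensorProduct.lift φ₁ φ₂ (fun _ _ ↦ Commute.all _ _)) (he.comm b)
    simpa using this
  obtain ⟨y, hy⟩ := mem_piPow.1 h
  have h2 : ε = p ^ N • (1 + p • y) := by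
    rw [sub_eq_iff_eq_add] at hy
    rw [hy, smul_add, Algebra.smul_def (p ^ N) (1 : D), mul_one, pow_succ, mul_smul, add_comm]
  have h3 : (φ₂ b - φ₁ b) * (1 + p • y) = 0 := by
    apply pow_smul_eq_zero hD.reg N
    rw [← mul_smul_comm, ← h2, h1]
  have h4 : φ₂ b - φ₁ b = 0 := eq_zero_of_mul hD (u := 1 + p • y)
    (by simpa using smul_mem_piPow (p := p) 1 y) h3
  exact (sub_eq_zero.1 h4).symm

/-- Two algebra maps that agree modulo `p ^ (N + 1)` are equal. -/
lemma algHom_eq_of_congr (hD : RegComplete p D) {N : ℕ} {e : B ⊗[A] B} (he : IsSepElt p N e)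
    (φ₁ φ₂ : B →ₐ[A] D) (h : ∀ b, φ₁ b - φ₂ b ∈ piPow p D (N + 1)) : φ₁ = φ₂ := by
  refine algHom_eq_of_sepElt hD he φ₁ φ₂ ?_
  have h1 : algebraMap A D (p ^ N) =
      Algebra.TensorProduct.lift φ₂ φ₂ (fun _ _ ↦ Commute.all _ _) e := by
    rw [lift_self_apply, he.mul, φ₂.commutes]
  rw [h1]
  refine e.induction_on (by simp) (fun a b ↦ ?_) fun x y hx hy ↦ ?_
  · simp only [Algebra.TensorProduct.lift_tmul, ← sub_mul]
    exact mul_mem_piPow_right _ (h a)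
  · rw [map_add, map_add, add_sub_add_comm]
    exact add_mem hx hy

/-- The failure of a linear map to be multiplicative, as a bilinear map. -/
def mulDefect (φ : B →ₗ[A] D) : B →ₗ[A] B →ₗ[A] D :=
  (LinearMap.mul A B).compr₂ φ - (LinearMap.mul A D).compl₁₂ φ φ

lemma mulDefect_apply (φ : B →ₗ[A] D) (a b : B) :
    mulDefect φ a b = φ (a * b) - φ a * φ b := by
  simp [mulDefect]

lemma map_one_sub_one_mem {n : ℕ} (φ : B →ₗ[A] D) (h1 : φ 1 - 1 ∈ piPow p D 1)
    (h : φ 1 - φ 1 * φ 1 ∈ piPow p D n) : φ 1 - 1 ∈ piPow p D n := by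
  refine mem_piPow_of_mul h1 n ?_
  rw [← neg_mem_iff]
  convert h using 1
  ring

/-- One Newton step.  The defect `c` of `φ` satisfies the Hochschild cocycle identity, with `B`
acting through `φ`, and contracting this identity with the separability element `e` writes
`p ^ N c` as a coboundary up to terms of twice the precision.  Dividing the resulting cochain by
`p ^ N` and adding it to `φ` costs `N` digits of closeness but improves the defect. -/
lemma newton_step (hD : RegComplete p D) {N : ℕ} {e : B ⊗[A] B} (he : IsSepElt p N e)
    {n : ℕ} (hn : 2 * N + 1 ≤ n) (φ : B →ₗ[A] D) (h1 : φ 1 - 1 ∈ piPow p D 1)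
    (hφ : ∀ a b, φ (a * b) - φ a * φ b ∈ piPow p D n) :
    ∃ φ' : B →ₗ[A] D, φ' 1 - 1 ∈ piPow p D 1 ∧
      (∀ a b, φ' (a * b) - φ' a * φ' b ∈ piPow p D (n + 1)) ∧
      ∀ b, φ' b - φ b ∈ piPow p D (n - N) := by
  obtain ⟨S, hS⟩ := TensorProduct.exists_finset e
  let c := mulDefect φ
  have hc : ∀ a b, c a b ∈ piPow p D n := fun a b ↦ by
    rw [mulDefect_apply]; exact hφ a b
  let h : B →ₗ[A] D := ∑ i ∈ S, LinearMap.mulLeft A (φ i.1) ∘ₗ c i.2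
  have happ : ∀ b, h b = ∑ i ∈ S, φ i.1 * c i.2 b := fun b ↦ by
    simp [h, LinearMap.sum_apply]
  have hmem : ∀ b, h b ∈ piPow p D n := fun b ↦ by
    rw [happ]
    exact Submodule.sum_mem _ fun i _ ↦ mul_mem_piPow_left _ (hc _ _)
  obtain ⟨h'', hh''⟩ := exists_smul_linearMap hD.reg n h hmem
  let h' : B →ₗ[A] D := p ^ (n - N) • h''
  have hh' : ∀ b, p ^ N • h' b = h b := fun b ↦ by
    rw [hh'', LinearMap.smul_apply, smul_smul, ← pow_add]
    congr 2; omega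
  have hh'mem : ∀ b, h' b ∈ piPow p D (n - N) := fun b ↦ smul_mem_piPow _ _
  -- the relation `(1 ⊗ a - a ⊗ 1) * e = 0`, contracted with `φ ⊗ c (·, b)`
  have hcen : ∀ a b, ∑ i ∈ S, φ i.1 * c (i.2 * a) b = ∑ i ∈ S, φ (a * i.1) * c i.2 b := by
    intro a b
    have := congrArg (TensorProduct.lift ((LinearMap.mul A D).compl₁₂ φ (c.flip b))) (he.comm a)
    rw [hS, Finset.mul_sum, map_sum, map_zero] at this
    rw [← sub_eq_zero, ← Finset.sum_sub_distrib, ← this]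
    refine Finset.sum_congr rfl fun i _ ↦ ?_
    rw [sub_mul, Algebra.TensorProduct.tmul_mul_tmul, Algebra.TensorProduct.tmul_mul_tmul, map_sub]
    simp [mul_comm a i.2]
  have hunit : ∑ i ∈ S, φ (i.1 * i.2) = p ^ N • φ 1 := by
    have := congrArg φ he.mul
    rw [hS, map_sum, map_sum, Algebra.algebraMap_eq_smul_one, map_smul] at this
    simpa using this
  have hcoc : ∀ a b d, φ a * c b d - c (a * b) d + c a (b * d) - c a b * φ d = 0 := by
    intro a b d
    simp only [c, mulDefect_apply, mul_assoc]
    ring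
  have hδ : ∀ a b, φ a * h b - h (a * b) + h a * φ b =
      p ^ N • (φ 1 * c a b) - (∑ i ∈ S, c i.1 i.2) * c a b - ∑ i ∈ S, c a i.1 * c i.2 b := by
    intro a b
    have e1 : p ^ N • (φ 1 * c a b) = ∑ i ∈ S, φ (i.1 * i.2) * c a b := by
      rw [← smul_mul_assoc, ← hunit, Finset.sum_mul]
    have e2 : ∑ i ∈ S, φ (a * i.1) * c i.2 b - ∑ i ∈ S, φ i.1 * c (i.2 * a) b = 0 := by
      rw [hcen, sub_self]
    rw [e1, happ, happ, happ, Finset.mul_sum, Finset.sum_mul, Finset.sum_mul,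
      ← sub_eq_zero, ← e2]
    simp only [← Finset.sum_sub_distrib, ← Finset.sum_add_distrib]
    refine Finset.sum_congr rfl fun i _ ↦ ?_
    have e3 := hcoc i.2 a b
    have e4 : c i.1 i.2 = φ (i.1 * i.2) - φ i.1 * φ i.2 := mulDefect_apply _ _ _
    have e5 : c a i.1 = φ (a * i.1) - φ a * φ i.1 := mulDefect_apply _ _ _
    rw [e4, e5]
    linear_combination (-φ i.1) * e3
  have h1' : (φ + h') 1 - 1 ∈ piPow p D 1 := by
    rw [LinearMap.add_apply, add_sub_right_comm]
    exact add_mem h1 (piPow_anti (by omega) (hh'mem 1))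
  refine ⟨φ + h', h1', fun a b ↦ ?_, fun b ↦ ?_⟩
  · apply mem_piPow_of_smul hD.reg N
    have e1 : p ^ N • ((φ + h') (a * b) - (φ + h') a * (φ + h') b) =
        - (p ^ N • ((φ 1 - 1) * c a b)) + (∑ i ∈ S, c i.1 i.2) * c a b
          + ∑ i ∈ S, c a i.1 * c i.2 b - p ^ N • (h' a * h' b) := by
      have e2 := hδ a b
      simp only [← hh', Algebra.smul_def, LinearMap.add_apply] at e2 ⊢
      have e3 : c a b = φ (a * b) - φ a * φ b := mulDefect_apply _ _ _
      linear_combination (-1 : D) * e2 - (algebraMap A D (p ^ N)) * e3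
    have hφ1 : φ 1 - 1 ∈ piPow p D n :=
      map_one_sub_one_mem φ h1 (by simpa using hφ 1 1)
    rw [e1]
    refine sub_mem (add_mem (add_mem (neg_mem ?_) ?_) ?_) ?_
    · exact piPow_anti (by omega) (smul_pow_mem_piPow N (mul_mem_piPow hφ1 (hc a b)))
    · exact piPow_anti (by omega)
        (mul_mem_piPow (Submodule.sum_mem _ fun i _ ↦ hc i.1 i.2) (hc a b))
    · exact piPow_anti (by omega)
        (Submodule.sum_mem _ fun i _ ↦ mul_mem_piPow (hc a i.1) (hc i.2 b))
    · exact piPow_anti (by omega)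
        (smul_pow_mem_piPow N (mul_mem_piPow (hh'mem a) (hh'mem b)))
  · rw [LinearMap.add_apply, add_sub_cancel_left]
    exact hh'mem b

/-- An approximately multiplicative linear map into a complete algebra is close to an algebra
map, namely the limit of its Newton iterates. -/
lemma exists_algHom (hD : RegComplete p D) {N : ℕ} {e : B ⊗[A] B} (he : IsSepElt p N e)
    {n : ℕ} (hn : 2 * N + 1 ≤ n) (φ : B →ₗ[A] D) (h1 : φ 1 - 1 ∈ piPow p D 1)
    (hφ : ∀ a b, φ (a * b) - φ a * φ b ∈ piPow p D n) :
    ∃ φ' : B →ₐ[A] D, ∀ b, φ' b - φ b ∈ piPow p D (n - N) := by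
  let P (k : ℕ) := {φ : B →ₗ[A] D // φ 1 - 1 ∈ piPow p D 1 ∧
      ∀ a b, φ (a * b) - φ a * φ b ∈ piPow p D (n + k)}
  have step : ∀ k (x : P k), ∃ y : P (k + 1), ∀ b, y.1 b - x.1 b ∈ piPow p D (n - N + k) := by
    intro k x
    obtain ⟨y, hy1, hy2, hy3⟩ := newton_step hD he (by omega : 2 * N + 1 ≤ n + k) x.1 x.2.1 x.2.2
    exact ⟨⟨y, hy1, hy2⟩, fun b ↦ piPow_anti (by omega) (hy3 b)⟩
  choose nxt hnxt using step
  let s : ∀ k, P k := fun k ↦ Nat.rec ⟨φ, h1, hφ⟩ (fun k x ↦ nxt k x) k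
  have hs : ∀ k b, (s (k + 1)).1 b - (s k).1 b ∈ piPow p D (n - N + k) := fun k b ↦ hnxt k (s k) b
  have hlim := fun b ↦ hD.prec (fun k ↦ (s k).1 b) fun k ↦ piPow_anti (by omega) (hs k b)
  choose l hl using hlim
  have hs0 : ∀ k b, (s k).1 b - φ b ∈ piPow p D (n - N) := by
    intro k b
    induction k with
    | zero => simp [s]
    | succ k ih =>
      rw [← sub_add_sub_cancel _ ((s k).1 b)]
      exact add_mem (piPow_anti (by omega) (hs k b)) ih
  have hadd : ∀ a b, l (a + b) = l a + l b := fun a b ↦ by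
    refine sub_eq_zero.1 (hD.haus _ fun k ↦ ?_)
    have : l (a + b) - (l a + l b) = (l (a + b) - (s k).1 (a + b)) - (l a - (s k).1 a)
        - (l b - (s k).1 b) := by rw [map_add]; ring
    rw [this]
    exact sub_mem (sub_mem (hl _ k) (hl _ k)) (hl _ k)
  have hmul : ∀ a b, l (a * b) = l a * l b := fun a b ↦ by
    refine sub_eq_zero.1 (hD.haus _ fun k ↦ ?_)
    have : l (a * b) - l a * l b = (l (a * b) - (s k).1 (a * b))
        + ((s k).1 (a * b) - (s k).1 a * (s k).1 b) - (l a - (s k).1 a) * l b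
        - (s k).1 a * (l b - (s k).1 b) := by ring
    rw [this]
    exact sub_mem (sub_mem (add_mem (hl _ k) (piPow_anti (by omega : k ≤ n + k) ((s k).2.2 a b)))
      (mul_mem_piPow_right _ (hl _ k))) (mul_mem_piPow_left _ (hl _ k))
  have hone : l 1 = 1 := by
    refine sub_eq_zero.1 (hD.haus _ fun k ↦ ?_)
    rw [← sub_add_sub_cancel _ ((s k).1 1)]
    exact add_mem (hl _ k) (piPow_anti (by omega : k ≤ n + k)
      (map_one_sub_one_mem _ (s k).2.1 (by simpa using (s k).2.2 1 1)))
  have hsmul : ∀ (r : A) b, l (r • b) = r • l b := fun r b ↦ by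
    refine sub_eq_zero.1 (hD.haus _ fun k ↦ ?_)
    have : l (r • b) - r • l b = (l (r • b) - (s k).1 (r • b)) - r • (l b - (s k).1 b) := by
      rw [map_smul, smul_sub]; ring
    rw [this]
    exact sub_mem (hl _ k) (Submodule.smul_mem _ _ (hl _ k))
  refine ⟨AlgHom.ofLinearMap ⟨⟨l, hadd⟩, hsmul⟩ hone hmul, fun b ↦ ?_⟩
  change l b - φ b ∈ _
  rw [← sub_add_sub_cancel _ ((s (n - N)).1 b)]
  exact add_mem (hl _ _) (hs0 _ b)

end Algebra

/-! ### Existence of separability elements -/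

section SepElt

variable {A : Type*} [CommRing A] {p : A}

/-- A flat module over a ring in which `p` is regular embeds into its localization at `p`. -/
lemma one_tmul_injective (hp : p ∈ nonZeroDivisors A) (M : Type*) [AddCommGroup M] [Module A M]
    [Module.Flat A M] (m : M) (hm : (1 : Localization.Away p) ⊗ₜ[A] m = 0) : m = 0 := by
  have hinj : Function.Injective (Algebra.linearMap A (Localization.Away p)) :=
    IsLocalization.injective _ (Submonoid.powers_le.2 hp)
  have h := Module.Flat.rTensor_preserves_injective_linearMap (M := M) _ hinj
  have h1 : (1 : A) ⊗ₜ[A] m = 0 := h (by simpa using hm)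
  simpa using congrArg (TensorProduct.lid A M) h1

/-- A finite projective algebra that is unramified after inverting `p` has a separability
element up to a power of `p`: clear denominators in the separability idempotent over
`A[1/p]`. -/
lemma exists_isSepElt (hp : p ∈ nonZeroDivisors A) (B : Type*) [CommRing B] [Algebra A B]
    [Module.Finite A B] [Module.Projective A B]
    [Algebra.FormallyUnramified (Localization.Away p) (Localization.Away p ⊗[A] B)] :
    ∃ (N : ℕ) (e : B ⊗[A] B), IsSepElt p N e := by
  let T := Localization.Away p
  obtain ⟨t, ht1, ht2⟩ :=
    (Algebra.FormallyUnramified.iff_exists_tensorProduct (R := T) (S := T ⊗[A] B)).1 inferInstance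
  -- `Θ` identifies `(T ⊗ B) ⊗[T] (T ⊗ B)` with `T ⊗ (B ⊗ B)`; only this direction is needed.
  let Θ : (T ⊗[A] B) ⊗[T] (T ⊗[A] B) →ₐ[T] T ⊗[A] (B ⊗[A] B) :=
    Algebra.TensorProduct.lift
      (Algebra.TensorProduct.map (AlgHom.id T T) Algebra.TensorProduct.includeLeft)
      (Algebra.TensorProduct.map (AlgHom.id T T) Algebra.TensorProduct.includeRight)
      (fun _ _ ↦ Commute.all _ _)
  have hΘmul : (Algebra.TensorProduct.map (AlgHom.id T T) (Algebra.TensorProduct.lmul' A)).comp Θ =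
      (Algebra.TensorProduct.lmul' T : (T ⊗[A] B) ⊗[T] (T ⊗[A] B) →ₐ[T] T ⊗[A] B) := by
    ext <;> simp [Θ]
  obtain ⟨⟨e, ⟨_, N, rfl⟩⟩, he⟩ := IsLocalizedModule.surj (Submonoid.powers p)
    (TensorProduct.mk A T (B ⊗[A] B) 1) (Θ t)
  replace he : p ^ N • Θ t = (1 : T) ⊗ₜ[A] e := he
  refine ⟨N, e, fun b ↦ ?_, ?_⟩
  · apply one_tmul_injective hp
    have h := congrArg Θ (ht1 ((1 : T) ⊗ₜ[A] b))
    rw [map_mul, map_zero] at h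
    have h2 : (1 : T) ⊗ₜ[A] (((1 : B) ⊗ₜ[A] b - b ⊗ₜ[A] (1 : B)) * e) =
      ((1 : T) ⊗ₜ[A] ((1 : B) ⊗ₜ[A] b - b ⊗ₜ[A] (1 : B))) * ((1 : T) ⊗ₜ[A] e) := by simp
    rw [h2, ← he, mul_smul_comm]
    convert smul_zero (p ^ N) using 2
    rw [← h]
    simp [Θ, TensorProduct.tmul_sub, Algebra.TensorProduct.one_def]
  · rw [← sub_eq_zero]
    apply one_tmul_injective hp
    rw [TensorProduct.tmul_sub, sub_eq_zero]
    have h := congrArg (Algebra.TensorProduct.map (AlgHom.id T T) (Algebra.TensorProduct.lmul' A)) he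
    have h3 := DFunLike.congr_fun hΘmul t
    rw [AlgHom.comp_apply, ht2] at h3
    rw [Algebra.algebraMap_eq_smul_one, TensorProduct.tmul_smul]
    rw [Algebra.smul_def (p ^ N) (Θ t), map_mul, h3, mul_one] at h
    simp only [Algebra.TensorProduct.map_tmul, map_one] at h
    refine h.symm.trans ((((Algebra.TensorProduct.map (AlgHom.id T T)
      (Algebra.TensorProduct.lmul' A)).restrictScalars A).commutes (p ^ N)).trans ?_)
    rw [Algebra.algebraMap_eq_smul_one, Algebra.TensorProduct.one_def]

end SepElt

/-! ### Tensoring with a finite projective module -/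

section Tensor

variable {A : Type*} [CommRing A] {p : A}

/-- The dual basis lemma for finite projective modules. -/
lemma exists_dualBasis (B : Type*) [AddCommGroup B] [Module A B] [Module.Finite A B]
    [Module.Projective A B] :
    ∃ (d : ℕ) (b : Fin d → B) (s : Fin d → B →ₗ[A] A), ∀ x, ∑ k, s k x • b k = x := by
  obtain ⟨d, f, g, -, -, h⟩ := Module.Finite.exists_comp_eq_id_of_projective A B
  refine ⟨d, fun k ↦ f (Pi.single k 1), fun k ↦ LinearMap.proj k ∘ₗ g, fun x ↦ ?_⟩
  conv_rhs => rw [← LinearMap.id_apply (R := A) x, ← h, LinearMap.comp_apply,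
    pi_eq_sum_univ' (g x), map_sum]
  refine Finset.sum_congr rfl fun k _ ↦ ?_
  rw [map_smul]
  rfl

/-- The coordinate map `S ⊗ B → S` attached to a linear form on `B`. -/
def tensorCoord (S : Type*) [AddCommGroup S] [Module A S] {B : Type*} [AddCommGroup B]
    [Module A B] (s : B →ₗ[A] A) : S ⊗[A] B →ₗ[A] S :=
  (TensorProduct.rid A S).toLinearMap ∘ₗ s.lTensor S

variable {S S' : Type*} [AddCommGroup S] [Module A S] [AddCommGroup S'] [Module A S']
  {B : Type*} [AddCommGroup B] [Module A B]

lemma tensorCoord_rTensor (u : S →ₗ[A] S') (s : B →ₗ[A] A) (z : S ⊗[A] B) :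
    tensorCoord S' s (u.rTensor B z) = u (tensorCoord S s z) := by
  induction z with
  | zero => simp
  | tmul x y => simp [tensorCoord]
  | add x y hx hy => simp only [map_add, hx, hy]

lemma sum_tensorCoord {d : ℕ} {b : Fin d → B} {s : Fin d → B →ₗ[A] A}
    (h : ∀ x, ∑ k, s k x • b k = x) (z : S ⊗[A] B) :
    ∑ k, (TensorProduct.mk A S B).flip (b k) (tensorCoord S (s k) z) = z := by
  induction z with
  | zero => simp
  | tmul x y =>
    conv_rhs => rw [← h y, TensorProduct.tmul_sum]
    simp [tensorCoord]
  | add x y hx hy =>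
    simp only [map_add, Finset.sum_add_distrib, hx, hy]

lemma RegComplete.tensor (hS : RegComplete p S) [Module.Finite A B] [Module.Projective A B] :
    RegComplete p (S ⊗[A] B) := by
  obtain ⟨d, b, s, h⟩ := exists_dualBasis (A := A) B
  exact hS.of_coordinates (fun k ↦ tensorCoord S (s k))
    (fun k ↦ (TensorProduct.mk A S B).flip (b k)) fun z ↦ sum_tensorCoord h z

end Tensor

/-! ### Colimits up to completion -/

section Colim

variable {A : Type*} [CommRing A] (p : A) {J : Type*} [Preorder J]

/-- `H` is, up to `p`-adic completion, the colimit of the directed system `(S, f)` through the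
maps `u`: every element of `H` is approximated by elements of the `S i`, and divisibility by
powers of `p` in `H` is already visible at a finite level. -/
structure IsApproxColim {S : J → Type*} [∀ i, AddCommGroup (S i)] [∀ i, Module A (S i)]
    (f : ∀ i j, i ≤ j → S i →ₗ[A] S j) {H : Type*} [AddCommGroup H] [Module A H]
    (u : ∀ i, S i →ₗ[A] H) : Prop where
  trans : ∀ i j k (hij : i ≤ j) (hjk : j ≤ k) x, f j k hjk (f i j hij x) = f i k (hij.trans hjk) x
  compat : ∀ i j (h : i ≤ j) x, u j (f i j h x) = u i x
  approx : ∀ n (h : H), ∃ i, ∃ x : S i, h - u i x ∈ piPow p H n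
  dvd : ∀ n i (x : S i), u i x ∈ piPow p H n → ∃ j, ∃ h : i ≤ j, f i j h x ∈ piPow p (S j) n

namespace IsApproxColim

variable {p} [IsDirected J (· ≤ ·)] [Nonempty J]
variable {S : J → Type*} [∀ i, AddCommGroup (S i)] [∀ i, Module A (S i)]
    {f : ∀ i j, i ≤ j → S i →ₗ[A] S j} {H : Type*} [AddCommGroup H] [Module A H]
    {u : ∀ i, S i →ₗ[A] H}

lemma approx_finite (hC : IsApproxColim p f u) (n : ℕ) {κ : Type*} [Finite κ] (h : κ → H) :
    ∃ i, ∃ x : κ → S i, ∀ k, h k - u i (x k) ∈ piPow p H n := by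
  choose i x hx using fun k ↦ hC.approx n (h k)
  obtain ⟨j, hj⟩ := Finite.exists_le i
  exact ⟨j, fun k ↦ f _ _ (hj k) (x k), fun k ↦ by rw [hC.compat]; exact hx k⟩

lemma dvd_finite (hC : IsApproxColim p f u) (n : ℕ) {κ : Type*} [Finite κ] (i : J)
    (x : κ → S i) (hx : ∀ k, u i (x k) ∈ piPow p H n) :
    ∃ j, ∃ h : i ≤ j, ∀ k, f i j h (x k) ∈ piPow p (S j) n := by
  choose j hj hx using fun k ↦ hC.dvd n i (x k) (hx k)
  obtain ⟨m, hm⟩ := Finite.exists_le j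
  obtain ⟨m', him, hmm⟩ := exists_ge_ge i m
  refine ⟨m', him, fun k ↦ ?_⟩
  rw [← hC.trans _ _ _ (hj k) ((hm k).trans hmm)]
  exact map_mem_piPow _ (hx k)

lemma tensor (hC : IsApproxColim p f u) (B : Type*) [AddCommGroup B] [Module A B]
    [Module.Finite A B] [Module.Projective A B] :
    IsApproxColim p (fun i j h ↦ (f i j h).rTensor B) (fun i ↦ (u i).rTensor B) := by
  obtain ⟨d, b, s, hb⟩ := exists_dualBasis (A := A) B
  refine ⟨fun i j k hij hjk x ↦ ?_, fun i j h x ↦ ?_, fun n h ↦ ?_, fun n i x hx ↦ ?_⟩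
  · rw [← LinearMap.rTensor_comp_apply]
    congr 2
    ext y
    exact hC.trans i j k hij hjk y
  · rw [← LinearMap.rTensor_comp_apply]
    congr 2
    ext y
    exact hC.compat i j h y
  · obtain ⟨i, x, hx⟩ := hC.approx_finite n fun k ↦ tensorCoord H (s k) h
    refine ⟨i, ∑ k, x k ⊗ₜ b k, ?_⟩
    have e1 := sum_tensorCoord hb h
    rw [← e1, map_sum, ← Finset.sum_sub_distrib]
    refine Submodule.sum_mem _ fun k _ ↦ ?_
    rw [LinearMap.rTensor_tmul]
    have := map_mem_piPow ((TensorProduct.mk A H B).flip (b k)) (hx k)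
    rwa [map_sub] at this
  · obtain ⟨j, hij, hj⟩ := hC.dvd_finite n i (fun k ↦ tensorCoord (S i) (s k) x) fun k ↦ by
      rw [← tensorCoord_rTensor]; exact map_mem_piPow _ hx
    refine ⟨j, hij, ?_⟩
    rw [← sum_tensorCoord hb ((f i j hij).rTensor B x)]
    refine Submodule.sum_mem _ fun k _ ↦ ?_
    rw [tensorCoord_rTensor]
    exact map_mem_piPow _ (hj k)

end IsApproxColim

variable {p}
variable {D : J → Type*} [∀ i, CommRing (D i)] [∀ i, Algebra A (D i)]
    {F : ∀ i j, i ≤ j → D i →ₐ[A] D j} {H : Type*} [CommRing H] [Algebra A H]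
    {U : ∀ i, D i →ₐ[A] H} {B : Type*} [CommRing B] [Algebra A B]

/-- Two algebra maps into a finite level that agree in `H` agree at a later level.  The maps
`U i` need not become injective in the limit, so instead of comparing values one uses that
`(φ₁ ⊗ φ₂) e` maps to `p ^ N` in `H`, hence is congruent to `p ^ N` modulo `p ^ (N + 1)` at a
later level. -/
lemma exists_comp_eq_of_comp_eq
    (hC : IsApproxColim p (fun i j h ↦ (F i j h).toLinearMap) (fun i ↦ (U i).toLinearMap))
    (hD : ∀ i, RegComplete p (D i)) {N : ℕ} {e : B ⊗[A] B} (he : IsSepElt p N e)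
    (i : J) (φ₁ φ₂ : B →ₐ[A] D i) (h : (U i).comp φ₁ = (U i).comp φ₂) :
    ∃ j, ∃ hij : i ≤ j, (F i j hij).comp φ₁ = (F i j hij).comp φ₂ := by
  set ε := Algebra.TensorProduct.lift φ₁ φ₂ (fun _ _ ↦ Commute.all _ _) e with hε
  have hU : U i (ε - algebraMap A (D i) (p ^ N)) = 0 := by
    rw [map_sub, hε, ← lift_comp_apply, h, AlgHom.commutes, lift_self_apply, he.mul,
      AlgHom.commutes, sub_self]
  obtain ⟨j, hij, hj⟩ := hC.dvd (N + 1) i (ε - algebraMap A (D i) (p ^ N))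
    (by rw [AlgHom.toLinearMap_apply, hU]; exact zero_mem _)
  refine ⟨j, hij, algHom_eq_of_sepElt (hD j) he _ _ ?_⟩
  rwa [lift_comp_apply, ← (F i j hij).commutes, ← map_sub]

/-- Every algebra map into `H` comes from a finite level: approximate it by a linear map into some
`D i`, which is multiplicative up to a high power of `p` at a later level, and correct that map
to an algebra map there. -/
lemma exists_comp_eq [IsDirected J (· ≤ ·)] [Nonempty J] [Module.Finite A B] [Module.Projective A B]
    (hC : IsApproxColim p (fun i j h ↦ (F i j h).toLinearMap) (fun i ↦ (U i).toLinearMap))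
    (hD : ∀ i, RegComplete p (D i)) (hH : RegComplete p H)
    {N : ℕ} {e : B ⊗[A] B} (he : IsSepElt p N e) (ψ : B →ₐ[A] H) :
    ∃ i, ∃ φ : B →ₐ[A] D i, (U i).comp φ = ψ := by
  obtain ⟨d, b, s, hb⟩ := exists_dualBasis (A := A) B
  obtain ⟨i, z, hz⟩ := hC.approx_finite (2 * N + 1) fun k ↦ ψ (b k)
  let φ₀ : B →ₗ[A] D i := ∑ k, (s k).smulRight (z k)
  have hφ₀ : ∀ x, ψ x - U i (φ₀ x) ∈ piPow p H (2 * N + 1) := fun x ↦ by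
    have e1 : ψ x = ∑ k, s k x • ψ (b k) := by
      conv_lhs => rw [← hb x]
      simp only [map_sum, map_smul]
    simp only [e1, φ₀, LinearMap.sum_apply, map_sum, LinearMap.smulRight_apply,
      ← Finset.sum_sub_distrib, map_smul, ← smul_sub]
    exact Submodule.sum_mem _ fun k _ ↦ Submodule.smul_mem _ _ (hz k)
  -- `none` indexes `φ₀ 1 - 1`, and `some (k, l)` the defect at two generators of `B`
  obtain ⟨j, hij, hj⟩ := hC.dvd_finite (2 * N + 1) i
    (fun o : Option (Fin d × Fin d) ↦
      o.elim (φ₀ 1 - 1) fun kl ↦ mulDefect φ₀ (b kl.1) (b kl.2)) <| by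
    rintro (_ | ⟨k, l⟩)
    · rw [← neg_mem_iff]
      simpa using hφ₀ 1
    · have h1 : U i (mulDefect φ₀ (b k) (b l)) =
          ψ (b k) * (ψ (b l) - U i (φ₀ (b l))) + (ψ (b k) - U i (φ₀ (b k))) * U i (φ₀ (b l))
            - (ψ (b k * b l) - U i (φ₀ (b k * b l))) := by
        rw [mulDefect_apply, map_sub, map_mul (U i), map_mul ψ]; ring
      simp only [Option.elim_some, AlgHom.toLinearMap_apply, h1]
      exact sub_mem (add_mem (mul_mem_piPow_left _ (hφ₀ _)) (mul_mem_piPow_right _ (hφ₀ _)))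
        (hφ₀ _)
  let φ₁ : B →ₗ[A] D j := (F i j hij).toLinearMap ∘ₗ φ₀
  have hdef : ∀ x y, φ₁ (x * y) - φ₁ x * φ₁ y ∈ piPow p (D j) (2 * N + 1) := by
    intro x y
    rw [← mulDefect_apply, ← hb x, ← hb y]
    simp only [map_sum, LinearMap.sum_apply, map_smul, LinearMap.smul_apply]
    refine Submodule.sum_mem _ fun l _ ↦ ?_
    refine Submodule.smul_mem _ _ (Submodule.sum_mem _ fun k _ ↦ ?_)
    refine Submodule.smul_mem _ _ ?_
    have := hj (some (k, l))
    simpa [mulDefect_apply, φ₁] using this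
  have hone : φ₁ 1 - 1 ∈ piPow p (D j) 1 := by
    have := hj none
    exact piPow_anti (by omega : 1 ≤ 2 * N + 1) (by simpa [φ₁] using this)
  obtain ⟨φ, hφ⟩ := exists_algHom (hD j) he le_rfl φ₁ hone hdef
  refine ⟨j, φ, algHom_eq_of_congr hH he _ _ fun x ↦ ?_⟩
  have h2 : U j (φ₁ x) = U i (φ₀ x) := hC.compat i j hij (φ₀ x)
  have h3 : (U j).comp φ x - ψ x = U j (φ x - φ₁ x) - (ψ x - U i (φ₀ x)) := by
    rw [map_sub, h2, AlgHom.comp_apply]; ring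
  rw [h3]
  exact sub_mem (piPow_anti (by omega) (map_mem_piPow (U j).toLinearMap (hφ x)))
    (piPow_anti (by omega) (hφ₀ x))

end Colim

/-! ### The completion at a principal ideal -/

section Completion

variable {R : Type*} [CommRing R] (ϖ : R)

lemma mem_span_pow {n : ℕ} {x : R} : x ∈ Ideal.span {ϖ} ^ n ↔ ∃ y, x = ϖ ^ n * y := by
  rw [Ideal.span_singleton_pow, Ideal.mem_span_singleton]; rfl

lemma mem_piPow_iff_span {M : Type*} [AddCommGroup M] [Module R M] {n : ℕ} {x : M} :
    x ∈ piPow ϖ M n ↔ x ∈ (Ideal.span {ϖ} ^ n • ⊤ : Submodule R M) := by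
  rw [Ideal.span_singleton_pow, Submodule.ideal_span_singleton_smul,
    Submodule.mem_smul_pointwise_iff_exists, mem_piPow]
  simp [eq_comm]

lemma RegComplete.of_isAdicComplete {M : Type*} [AddCommGroup M] [Module R M]
    (hreg : ∀ x : M, ϖ • x = 0 → x = 0) [h : IsAdicComplete (Ideal.span {ϖ}) M] :
    RegComplete ϖ M where
  reg := hreg
  haus x hx := h.haus' x fun n ↦ by
    rw [SModEq.zero, ← mem_piPow_iff_span]; exact hx n
  prec s hs := by
    obtain ⟨l, hl⟩ := h.prec' s fun {m n} hmn ↦ by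
      rw [SModEq.comm, SModEq.sub_mem, ← mem_piPow_iff_span]
      induction n, hmn using Nat.le_induction with
      | base => simp
      | succ n hmn ih =>
        rw [← sub_add_sub_cancel _ (s n)]
        exact add_mem (piPow_anti hmn (hs n)) ih
    refine ⟨l, fun n ↦ ?_⟩
    rw [mem_piPow_iff_span, ← SModEq.sub_mem]
    exact (hl n).symm

lemma mem_piPow_completion {n : ℕ} {x : AdicCompletion (Ideal.span {ϖ}) R} :
    x ∈ piPow ϖ (AdicCompletion (Ideal.span {ϖ}) R) n ↔ x.val n = 0 := by
  rw [mem_piPow_iff_span, AdicCompletion.pow_smul_top_eq_ker_eval ⟨{ϖ}, by simp⟩,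
    LinearMap.mem_ker]
  rfl

lemma of_mem_piPow_iff {n : ℕ} {r : R} :
    AdicCompletion.of (Ideal.span {ϖ}) R r ∈ piPow ϖ (AdicCompletion (Ideal.span {ϖ}) R) n ↔
      r ∈ piPow ϖ R n := by
  rw [mem_piPow_completion, mem_piPow_iff_span, AdicCompletion.of_apply, Submodule.mkQ_apply,
    Submodule.Quotient.mk_eq_zero]

lemma exists_sub_of_mem_piPow (n : ℕ) (x : AdicCompletion (Ideal.span {ϖ}) R) :
    ∃ r, x - AdicCompletion.of (Ideal.span {ϖ}) R r ∈
      piPow ϖ (AdicCompletion (Ideal.span {ϖ}) R) n := by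
  obtain ⟨r, hr⟩ := Submodule.mkQ_surjective _ (x.val n)
  refine ⟨r, ?_⟩
  rw [mem_piPow_completion, AdicCompletion.val_sub_apply, AdicCompletion.of_apply, hr, sub_self]

/-- The completion of a `ϖ`-torsion-free ring is `ϖ`-torsion-free: if `ϖ x = 0` and `x` is
approximated by `r` modulo `ϖ ^ (n + 1)`, then `ϖ ^ (n + 1)` divides `ϖ r`, so `ϖ ^ n` divides
`r` and `x`. -/
lemma regComplete_completion (hϖ : ∀ x : R, ϖ * x = 0 → x = 0) :
    RegComplete ϖ (AdicCompletion (Ideal.span {ϖ}) R) := by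
  have := AdicCompletion.isAdicComplete (M := R) (I := Ideal.span {ϖ}) ⟨{ϖ}, by simp⟩
  refine RegComplete.of_isAdicComplete ϖ fun x hx ↦ ?_
  refine this.haus' x fun n ↦ ?_
  rw [SModEq.zero, ← mem_piPow_iff_span]
  obtain ⟨r, hr⟩ := exists_sub_of_mem_piPow ϖ (n + 1) x
  have h1 : ϖ • r ∈ piPow ϖ R (1 + n) := by
    rw [← of_mem_piPow_iff, map_smul, add_comm, ← neg_mem_iff]
    have := Submodule.smul_mem _ ϖ hr
    rwa [smul_sub, hx, zero_sub] at this
  have h2 : r ∈ piPow ϖ R n := mem_piPow_of_smul hϖ 1 n r (by simpa using h1)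
  rw [← sub_add_cancel x (AdicCompletion.of _ R r)]
  exact add_mem (piPow_anti (by omega) hr) ((of_mem_piPow_iff ϖ).2 h2)

/-- The submodules `p ^ n M` depend only on the action of `p`, not on the ring it is taken from. -/
lemma mem_piPow_congr {A : Type*} [CommRing A] {p : A} {ϖ : R} {M : Type*} [AddCommGroup M]
    [Module R M] [Module A M] (h : ∀ x : M, p • x = ϖ • x) {n : ℕ} {x : M} :
    x ∈ piPow p M n ↔ x ∈ piPow ϖ M n := by
  have : ∀ y : M, p ^ n • y = ϖ ^ n • y := by
    induction n with
    | zero => simp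
    | succ n ih => intro y; rw [pow_succ, pow_succ, mul_smul, mul_smul, h, ih]
  simp only [mem_piPow, this]

lemma RegComplete.of_smul {A : Type*} [CommRing A] {p : A} {M : Type*} [AddCommGroup M]
    [Module R M] [Module A M] (hM : RegComplete ϖ M) (h : ∀ x : M, p • x = ϖ • x) :
    RegComplete p M where
  reg x hx := hM.reg x (by rwa [← h])
  haus x hx := hM.haus x fun n ↦ (mem_piPow_congr h).1 (hx n)
  prec s hs := by
    simpa only [mem_piPow_congr h] using hM.prec s fun n ↦ (mem_piPow_congr h).1 (hs n)

end Completion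

/-! ### Full faithfulness of base change to the completed colimit -/

/-- The full-faithfulness part of Theorem 4.18 of the paper, in the affine case.  With `(R i)` a
directed system of `π`-adically complete and separated `π`-torsion-free `O`-algebras with
colimit `Rinf` and `π`-adic completion `Rhat` of `Rinf`, and with `B`, `B'` finite projective
`R i₀`-algebras which are étale after inverting `π`, the canonical map
`colim_{i ≥ i₀} Hom_{R i}(R i ⊗ B, R i ⊗ B') → Hom_{Rhat}(Rhat ⊗ B, Rhat ⊗ B')` is bijective.
Using the natural identification `Hom_{S}(S ⊗[R i₀] B, T) ≅ Hom_{R i₀}(B, T)` for an `S`-algebra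
`T`, this is expressed below as: (surjectivity) every `R i₀`-algebra map `B → Rhat ⊗ B'` factors
through `R i ⊗ B'` for some `i ≥ i₀` via the canonical map `α`, and (injectivity) two maps
`B → R i ⊗ B'` equalized by the canonical map `α` to `Rhat ⊗ B'` are already equalized by the
canonical map `β` to `R j ⊗ B'` for some `j ≥ i`.  The canonical `R i₀`-algebra structures and
base-change maps (which exist and are unique) are quantified universally together with the
equations characterizing them. -/
theorem stmt_12 {O : Type u} [CommRing O] (π : O)
    {ι : Type u'} [Preorder ι] [IsDirected ι (· ≤ ·)] [Nonempty ι]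
    (R : ι → Type v) [∀ i, CommRing (R i)] [∀ i, Algebra O (R i)]
    (f : ∀ i j, i ≤ j → (R i →ₐ[O] R j))
    (hf_id : ∀ i, f i i le_rfl = AlgHom.id O (R i))
    (hf_comp : ∀ i j k (hij : i ≤ j) (hjk : j ≤ k),
      (f j k hjk).comp (f i j hij) = f i k (hij.trans hjk))
    (hcpl : ∀ i, IsAdicComplete (Ideal.span {algebraMap O (R i) π}) (R i))
    (hreg : ∀ i, algebraMap O (R i) π ∈ nonZeroDivisors (R i))
    (Rinf : Type v) [CommRing Rinf] [Algebra O Rinf]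
    (g : ∀ i, R i →ₐ[O] Rinf)
    (hg : ∀ i j (h : i ≤ j), (g j).comp (f i j h) = g i)
    (hsurj : ∀ x : Rinf, ∃ i, x ∈ Set.range (g i))
    (hker : ∀ i (x y : R i), g i x = g i y → ∃ j, ∃ h : i ≤ j, f i j h x = f i j h y)
    (i₀ : ι)
    (B B' : Type v) [CommRing B] [CommRing B'] [Algebra (R i₀) B] [Algebra (R i₀) B']
    [Module.Finite (R i₀) B] [Module.Projective (R i₀) B]
    [Module.Finite (R i₀) B'] [Module.Projective (R i₀) B']
    (hEtB : Algebra.Etale (Localization.Away (algebraMap O (R i₀) π))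
      ((Localization.Away (algebraMap O (R i₀) π)) ⊗[R i₀] B))
    (hEtB' : Algebra.Etale (Localization.Away (algebraMap O (R i₀) π))
      ((Localization.Away (algebraMap O (R i₀) π)) ⊗[R i₀] B'))
    -- the canonical `R i₀`-algebra structure on the completion `Rhat` of `Rinf`:
    (instHat : Algebra (R i₀) (AdicCompletion (Ideal.span {algebraMap O Rinf π}) Rinf))
    (hinstHat : algebraMap (R i₀) (AdicCompletion (Ideal.span {algebraMap O Rinf π}) Rinf) =
      (algebraMap Rinf (AdicCompletion (Ideal.span {algebraMap O Rinf π}) Rinf)).comp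
        (g i₀).toRingHom) :
    -- surjectivity of the canonical map on Hom-sets:
    (∀ ψ : B →ₐ[R i₀]
        ((AdicCompletion (Ideal.span {algebraMap O Rinf π}) Rinf) ⊗[R i₀] B'),
      ∃ (i : ι) (hi : i₀ ≤ i), ∀ (_ : Algebra (R i₀) (R i)),
        algebraMap (R i₀) (R i) = (f i₀ i hi).toRingHom →
        ∀ α : ((R i) ⊗[R i₀] B') →ₐ[R i₀]
            ((AdicCompletion (Ideal.span {algebraMap O Rinf π}) Rinf) ⊗[R i₀] B'),
          (∀ (x : R i) (b : B'), α (x ⊗ₜ[R i₀] b) =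
            ((algebraMap Rinf (AdicCompletion (Ideal.span {algebraMap O Rinf π}) Rinf))
              (g i x)) ⊗ₜ[R i₀] b) →
          ∃ φ : B →ₐ[R i₀] ((R i) ⊗[R i₀] B'), α.comp φ = ψ) ∧
    -- injectivity of the canonical map on Hom-sets:
    (∀ (i : ι) (hi : i₀ ≤ i), ∀ (_ : Algebra (R i₀) (R i)),
      algebraMap (R i₀) (R i) = (f i₀ i hi).toRingHom →
      ∀ (φ₁ φ₂ : B →ₐ[R i₀] ((R i) ⊗[R i₀] B'))
        (α : ((R i) ⊗[R i₀] B') →ₐ[R i₀]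
          ((AdicCompletion (Ideal.span {algebraMap O Rinf π}) Rinf) ⊗[R i₀] B')),
        (∀ (x : R i) (b : B'), α (x ⊗ₜ[R i₀] b) =
          ((algebraMap Rinf (AdicCompletion (Ideal.span {algebraMap O Rinf π}) Rinf))
            (g i x)) ⊗ₜ[R i₀] b) →
        α.comp φ₁ = α.comp φ₂ →
        ∃ (j : ι) (hij : i ≤ j), ∀ (_ : Algebra (R i₀) (R j)),
          algebraMap (R i₀) (R j) = (f i₀ j (hi.trans hij)).toRingHom →
          ∀ β : ((R i) ⊗[R i₀] B') →ₐ[R i₀] ((R j) ⊗[R i₀] B'),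
            (∀ (x : R i) (b : B'), β (x ⊗ₜ[R i₀] b) = (f i j hij x) ⊗ₜ[R i₀] b) →
            β.comp φ₁ = β.comp φ₂) := by
  let A := R i₀
  let p : A := algebraMap O (R i₀) π
  let H := AdicCompletion (Ideal.span {algebraMap O Rinf π}) Rinf
  let J := {i // i₀ ≤ i}
  let _ : ∀ j : J, Algebra A (R j.1) := fun j ↦ (f i₀ j.1 j.2).toRingHom.toAlgebra
  have : Nonempty J := ⟨⟨i₀, le_rfl⟩⟩
  have : IsDirected J (· ≤ ·) := ⟨fun a b ↦ by
    obtain ⟨c, hac, hbc⟩ := exists_ge_ge a.1 b.1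
    exact ⟨⟨c, a.2.trans hac⟩, hac, hbc⟩⟩
  have hgf : ∀ i j h x, g j (f i j h x) = g i x := fun i j h x ↦ DFunLike.congr_fun (hg i j h) x
  have hff : ∀ i j k hij hjk x, f j k hjk (f i j hij x) = f i k (hij.trans hjk) x :=
    fun i j k hij hjk x ↦ DFunLike.congr_fun (hf_comp i j k hij hjk) x
  let F : ∀ i j : J, i ≤ j → R i.1 →ₐ[A] R j.1 := fun i j h ↦
    { (f i.1 j.1 h).toRingHom with commutes' := fun r ↦ hff _ _ _ i.2 h r }
  let U : ∀ i : J, R i.1 →ₐ[A] H := fun i ↦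
    { (algebraMap Rinf H).comp (g i.1).toRingHom with
      commutes' := fun r ↦ by
        rw [hinstHat]
        exact congrArg (algebraMap Rinf H) (hgf _ _ i.2 r) }
  have hU : ∀ i x, U i x = AdicCompletion.of _ Rinf (g i.1 x) := fun i x ↦ rfl
  -- `π` acts on every ring of the system through `p`
  have hpR : ∀ (j : J) (x : R j.1), p • x = algebraMap O (R j.1) π • x := fun j x ↦ by
    rw [Algebra.smul_def, smul_eq_mul]
    exact congrArg (· * x) ((f i₀ j.1 j.2).commutes π)
  have hpH : ∀ x : H, p • x = algebraMap O Rinf π • x := fun x ↦ by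
    rw [Algebra.smul_def, Algebra.smul_def, hinstHat]
    exact congrArg (fun y ↦ algebraMap Rinf H y * x) ((g i₀).commutes π)
  have hpHn : ∀ n (x : H), x ∈ piPow p H n ↔ x ∈ piPow (algebraMap O Rinf π) H n :=
    fun n x ↦ mem_piPow_congr hpH
  have hRreg : ∀ j (x : R j), algebraMap O (R j) π * x = 0 → x = 0 := fun j x hx ↦
    (mem_nonZeroDivisors_iff.1 (hreg j)).1 x hx
  have hinfreg : ∀ x : Rinf, algebraMap O Rinf π * x = 0 → x = 0 := fun x hx ↦ by
    obtain ⟨i, x, rfl⟩ := hsurj x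
    rw [← (g i).commutes, ← map_mul, ← map_zero (g i)] at hx
    obtain ⟨j, h, hj⟩ := hker i _ _ hx
    rw [map_mul, map_zero, AlgHom.commutes] at hj
    rw [← hgf i j h, hRreg j _ hj, map_zero]
  have hSrc : ∀ j : J, RegComplete p (R j.1) := fun j ↦
    have := hcpl j.1
    (RegComplete.of_isAdicComplete _ (hRreg j.1)).of_smul _ (hpR j)
  have hHrc : RegComplete p H := (regComplete_completion _ hinfreg).of_smul _ hpH
  have hC : IsApproxColim p (fun i j h ↦ (F i j h).toLinearMap) (fun i ↦ (U i).toLinearMap) := by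
    refine ⟨fun i j k hij hjk x ↦ hff _ _ _ hij hjk x,
      fun i j h x ↦ congrArg (algebraMap Rinf H) (hgf _ _ h x), fun n x ↦ ?_, fun n i x hx ↦ ?_⟩
    · obtain ⟨r, hr⟩ := exists_sub_of_mem_piPow _ n x
      obtain ⟨i, y, rfl⟩ := hsurj r
      obtain ⟨j, hij, hj⟩ := exists_ge_ge i i₀
      refine ⟨⟨j, hj⟩, f i j hij y, (hpHn _ _).2 ?_⟩
      rwa [AlgHom.toLinearMap_apply, hU, hgf]
    · have hgx : g i.1 x ∈ piPow (algebraMap O Rinf π) Rinf n :=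
        (of_mem_piPow_iff _).1 ((hpHn _ _).1 hx)
      obtain ⟨r, hr⟩ := mem_piPow.1 hgx
      obtain ⟨k, y, rfl⟩ := hsurj r
      obtain ⟨l, hil, hkl⟩ := exists_ge_ge i.1 k
      rw [← hgf i.1 l hil, ← hgf k l hkl, smul_eq_mul, ← (g l).commutes, ← map_pow,
        ← map_mul] at hr
      obtain ⟨m, hlm, hm⟩ := hker _ _ _ hr
      refine ⟨⟨m, i.2.trans (hil.trans hlm)⟩, hil.trans hlm, (mem_piPow_congr (hpR _)).2 ?_⟩
      rw [hff, map_mul, map_pow, AlgHom.commutes, ← smul_eq_mul] at hm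
      exact mem_piPow.2 ⟨_, hm⟩
  have hCB := hC.tensor B'
  have : Algebra.FormallyUnramified (Localization.Away p) (Localization.Away p ⊗[A] B) := by
    have := hEtB
    infer_instance
  obtain ⟨N, e, he⟩ := exists_isSepElt (hreg i₀) B
  let FB : ∀ i j : J, i ≤ j → R i.1 ⊗[A] B' →ₐ[A] R j.1 ⊗[A] B' := fun i j h ↦
    Algebra.TensorProduct.map (F i j h) (AlgHom.id A B')
  let UB : ∀ i : J, R i.1 ⊗[A] B' →ₐ[A] H ⊗[A] B' := fun i ↦
    Algebra.TensorProduct.map (U i) (AlgHom.id A B')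
  replace hCB : IsApproxColim p (fun i j h ↦ (FB i j h).toLinearMap)
    (fun i ↦ (UB i).toLinearMap) := hCB
  have hDrc : ∀ j : J, RegComplete p (R j.1 ⊗[A] B') := fun j ↦ (hSrc j).tensor
  refine ⟨fun ψ ↦ ?_, fun i hi inst hinst φ₁ φ₂ α hα h ↦ ?_⟩
  · obtain ⟨j, φ, hφ⟩ := exists_comp_eq hCB hDrc hHrc.tensor he ψ
    refine ⟨j.1, j.2, fun inst hinst α hα ↦ ?_⟩
    obtain rfl : inst = (f i₀ j.1 j.2).toRingHom.toAlgebra := Algebra.algebra_ext _ _ fun r ↦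
      DFunLike.congr_fun hinst r
    obtain rfl : α = UB j := Algebra.TensorProduct.ext' fun x b ↦ hα x b
    exact ⟨φ, hφ⟩
  · obtain ⟨i, rfl⟩ : ∃ i' : J, i'.1 = i := ⟨⟨i, hi⟩, rfl⟩
    obtain rfl : inst = (f i₀ i.1 hi).toRingHom.toAlgebra := Algebra.algebra_ext _ _ fun r ↦
      DFunLike.congr_fun hinst r
    obtain rfl : α = UB i := Algebra.TensorProduct.ext' fun x b ↦ hα x b
    obtain ⟨j, hij, hj⟩ := exists_comp_eq_of_comp_eq hCB hDrc he i φ₁ φ₂ h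
    refine ⟨j.1, hij, fun inst hinst β hβ ↦ ?_⟩
    obtain rfl : inst = (f i₀ j.1 j.2).toRingHom.toAlgebra := Algebra.algebra_ext _ _ fun r ↦
      DFunLike.congr_fun hinst r
    obtain rfl : β = FB i j hij := Algebra.TensorProduct.ext' fun x b ↦ hβ x b
    exact hj
end

section
/- Let A be a commutative ring, π ∈ A a nonzerodivisor on A, and B an A-algebra such that the image of π is a nonzerodivisor on B. If B/πB is a flat A/πA-module, then for every k ≥ 1 the A/π^kA-module B/π^kB is flat. -/
/-!
By the equational criterion, flatness of `B/pB` over `A/pA` is a statement about `A` and `B`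
themselves: every relation `∑ fᵢ xᵢ ∈ pB` is trivial modulo `p` (`TrivialModulo`). This property
is multiplicative in `p` as soon as `p` is a nonzerodivisor on `B` (`TrivialModulo.mul`), so it
passes from `π` to all powers of `π`.

For the multiplicativity, let `∑ fᵢ xᵢ = p q t`. Triviality modulo `p` gives
`xᵢ = ∑ⱼ aᵢⱼ yⱼ + p zᵢ` with `∑ᵢ fᵢ aᵢⱼ = p gⱼ`. Substituting and cancelling `p` leaves the
relation `∑ gⱼ yⱼ + ∑ fᵢ zᵢ = q t`, which is trivial modulo `q`: the `yⱼ` and `zᵢ` are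
combinations of new elements `wₘ`, up to errors `q y'ⱼ` and `q z'ᵢ`. Then the `xᵢ` are, modulo
`p q`, combinations of the `wₘ` and of the `y'ⱼ`, the latter with coefficients `q aᵢⱼ`; these
coefficients are harmless because `∑ᵢ fᵢ q aᵢⱼ = p q gⱼ`.
-/

/-- Every relation `∑ fᵢ xᵢ ∈ pB`, with `fᵢ ∈ A` and `xᵢ ∈ B`, is trivial modulo `p`: there are
`yⱼ ∈ B` and `aᵢⱼ ∈ A` with `xᵢ ≡ ∑ⱼ aᵢⱼ yⱼ` modulo `pB` and `∑ᵢ fᵢ aᵢⱼ ∈ pA`. The index types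
are finite and arbitrary, so that disjoint unions of them can be formed. -/
def TrivialModulo {A : Type*} (B : Type*) [CommRing A] [CommRing B] [Algebra A B] (p : A) : Prop :=
  ∀ (ι : Type) [Fintype ι] (f : ι → A) (x : ι → B) (t : B), ∑ i, f i • x i = p • t →
    ∃ (κ : Type) (_ : Fintype κ) (a : ι → κ → A) (y : κ → B) (z : ι → B) (g : κ → A),
      (∀ i, x i = ∑ j, a i j • y j + p • z i) ∧ ∀ j, ∑ i, f i * a i j = p * g j

theorem mk_eq_mk_map_span_iff {A B : Type*} [CommRing A] [CommRing B] [Algebra A B] (p : A)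
    (x y : B) :
    Ideal.Quotient.mk ((Ideal.span {p}).map (algebraMap A B)) x = Ideal.Quotient.mk _ y ↔
      ∃ z, x = y + p • z := by
  rw [Ideal.Quotient.eq, Ideal.map_span, Set.image_singleton, Ideal.mem_span_singleton]
  simp only [Dvd.dvd, Algebra.smul_def, sub_eq_iff_eq_add']

theorem flat_quotient_iff_trivialModulo {A B : Type*} [CommRing A] [CommRing B] [Algebra A B]
    (p : A) :
    Module.Flat (A ⧸ Ideal.span {p}) (B ⧸ (Ideal.span {p}).map (algebraMap A B)) ↔
      TrivialModulo B p := by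
  have hsmul (a : A) (b : B) : Ideal.Quotient.mk (Ideal.span {p}) a •
      Ideal.Quotient.mk ((Ideal.span {p}).map (algebraMap A B)) b =
        Ideal.Quotient.mk ((Ideal.span {p}).map (algebraMap A B)) (a • b) := rfl
  have hA (a : A) : Ideal.Quotient.mk (Ideal.span {p}) a = 0 ↔ ∃ g, a = p * g := by
    rw [Ideal.Quotient.eq_zero_iff_mem, Ideal.mem_span_singleton]; rfl
  constructor
  · intro hflat ι _ f x t h
    obtain ⟨k, a, y, hx, hf⟩ := Module.Flat.isTrivialRelation_of_sum_smul_eq_zero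
      (R := A ⧸ Ideal.span {p}) (M := B ⧸ (Ideal.span {p}).map (algebraMap A B))
      (f := fun i ↦ Ideal.Quotient.mk _ (f i)) (x := fun i ↦ Ideal.Quotient.mk _ (x i)) (by
        simp only [hsmul]
        rw [← map_sum, h, ← map_zero (Ideal.Quotient.mk _), mk_eq_mk_map_span_iff]
        exact ⟨t, by simp⟩)
    choose a' ha' using fun i j ↦ Ideal.Quotient.mk_surjective (a i j)
    choose y' hy' using fun j ↦ Ideal.Quotient.mk_surjective (y j)
    simp only [← ha', ← hy', hsmul, ← map_sum, mk_eq_mk_map_span_iff] at hx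
    simp only [← ha', ← map_mul, ← map_sum, hA] at hf
    choose z hz using hx
    choose g hg using hf
    exact ⟨Fin k, inferInstance, a', y', z, g, hz, hg⟩
  · intro H
    refine Module.Flat.of_forall_isTrivialRelation fun {l f x} h ↦ ?_
    choose f' hf' using fun i ↦ Ideal.Quotient.mk_surjective (f i)
    choose x' hx' using fun i ↦ Ideal.Quotient.mk_surjective (x i)
    simp only [← hf', ← hx', hsmul, ← map_sum] at h
    rw [← map_zero (Ideal.Quotient.mk _), mk_eq_mk_map_span_iff] at h
    obtain ⟨t, ht⟩ := h
    obtain ⟨κ, _, a, y, z, g, hx, hf⟩ := H (Fin l) f' x' t (by simpa using ht)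
    let e := Fintype.equivFin κ
    refine ⟨Fintype.card κ, fun i j ↦ Ideal.Quotient.mk _ (a i (e.symm j)),
      fun j ↦ Ideal.Quotient.mk _ (y (e.symm j)), fun i ↦ ?_, fun j ↦ ?_⟩
    · simp only [hsmul, ← map_sum, ← hx']
      rw [mk_eq_mk_map_span_iff]
      exact ⟨z i, by rw [hx i, e.symm.sum_comp fun j ↦ a i j • y j]⟩
    · simp only [← hf', ← map_mul, ← map_sum, hA]
      exact ⟨_, hf _⟩

theorem TrivialModulo.mul {A B : Type*} [CommRing A] [CommRing B] [Algebra A B] {p q : A}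
    (hp : TrivialModulo B p) (hq : TrivialModulo B q)
    (hreg : algebraMap A B p ∈ nonZeroDivisors B) : TrivialModulo B (p * q) := by
  intro ι _ f x t h
  obtain ⟨κ, _, a, y, z, g, hx, hf⟩ := hp ι f x (q • t) (by rw [h, mul_smul])
  have hcancel : ∑ s : κ ⊕ ι, Sum.elim g f s • Sum.elim y z s = q • t := by
    rw [← mul_cancel_left_mem_nonZeroDivisors hreg, ← Algebra.smul_def, ← Algebra.smul_def,
      ← mul_smul, ← h]
    simp only [Fintype.sum_sum_type, Sum.elim_inl, Sum.elim_inr, hx, smul_add, Finset.smul_sum,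
      Finset.sum_add_distrib, ← mul_smul, ← hf, Finset.sum_smul]
    rw [Finset.sum_comm]
    simp only [mul_comm]
  obtain ⟨μ, _, b, w, z', r, hyz, hr⟩ := hq (κ ⊕ ι) _ _ t hcancel
  have hy (j : κ) : y j = _ := hyz (.inl j)
  have hz (i : ι) : z i = _ := hyz (.inr i)
  refine ⟨μ ⊕ κ, inferInstance,
    fun i ↦ Sum.elim (fun m ↦ ∑ j, a i j * b (.inl j) m + p * b (.inr i) m) (fun j ↦ q * a i j),
    Sum.elim w (fun j ↦ z' (.inl j)), fun i ↦ z' (.inr i), Sum.elim r g, fun i ↦ ?_, ?_⟩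
  · rw [hx i, hz i]
    simp only [hy, Fintype.sum_sum_type, Sum.elim_inl, Sum.elim_inr, smul_add, add_smul,
      Finset.smul_sum, Finset.sum_smul, Finset.sum_add_distrib, ← mul_smul]
    rw [Finset.sum_comm]
    simp only [mul_comm q]
    abel
  · rintro (m | j)
    · have := hr m
      simp only [Fintype.sum_sum_type, Sum.elim_inl, Sum.elim_inr] at this ⊢
      rw [mul_assoc, ← this, mul_add, Finset.mul_sum, Finset.mul_sum]
      simp only [← mul_assoc, ← hf, mul_add, Finset.mul_sum, Finset.sum_mul,
        Finset.sum_add_distrib]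
      rw [Finset.sum_comm]
      simp only [mul_comm p]
    · simp only [Sum.elim_inr]
      rw [mul_right_comm, ← hf, Finset.sum_mul]
      exact Finset.sum_congr rfl fun i _ ↦ by ring

/-- The algebraic content of Lemma 1.15 of the paper: if `π` is a nonzerodivisor on `A` and on
the `A`-algebra `B`, and `B/πB` is flat over `A/πA`, then `B/πᵏB` is flat over `A/πᵏA` for all
`k ≥ 1`. -/
theorem stmt_14 {A B : Type*} [CommRing A] [CommRing B] [Algebra A B] (π : A)
    (hregA : π ∈ nonZeroDivisors A) (hregB : algebraMap A B π ∈ nonZeroDivisors B)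
    (hflat : Module.Flat (A ⧸ Ideal.span {π})
      (B ⧸ (Ideal.span {π}).map (algebraMap A B)))
    (k : ℕ) (hk : 1 ≤ k) :
    Module.Flat (A ⧸ Ideal.span {π ^ k})
      (B ⧸ (Ideal.span {π ^ k}).map (algebraMap A B)) := by
  rw [flat_quotient_iff_trivialModulo] at hflat ⊢
  induction k, hk using Nat.le_induction with
  | base => simpa using hflat
  | succ k _ ih =>
    rw [pow_succ]
    exact ih.mul hflat (by rw [map_pow]; exact pow_mem hregB k)
end

section
/- Let R be a commutative ring and π ∈ R. Let I = {x ∈ R | π^k x = 0 for some k ≥ 0} be the ideal of π-power torsion elements and let Ī = ⋂_{n ≥ 0} (I + π^nR) be its closure in the π-adic topology. Then: (i) the image of π in the quotient ring R/Ī is a nonzerodivisor; (ii) for every ring homomorphism f : R → S such that f(π) is a nonzerodivisor on S and ⋂_{n ≥ 0} f(π)^n S = 0, one has Ī ⊆ ker f, so that f factors uniquely through R/Ī. -/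
/-!
An element `x` lies in the `π`-adic closure of `I` iff for every `n` some `x - π ^ n * r` is
`π`-power torsion. If `π * x` lies in the closure, then `π * x - π ^ (n + 1) * r =
π * (x - π ^ n * r)` is `π`-power torsion, hence so is `x - π ^ n * r`; this shows that `π` is a
nonzerodivisor modulo the closure. A ring map sending `π` to a nonzerodivisor kills `π`-power
torsion, so it sends the closure into `⋂ₙ (f π) ^ n S`, which is zero for a separated target.
-/

universe u v

/-- The affine algebraic content of Lemma 1.18 of the paper. Let `I` be the ideal of `π`-power
torsion elements of `R` and `Ī = ⋂ₙ (I + πⁿR)` its `π`-adic closure. Then (i) the image of `π`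
in `R/Ī` is a nonzerodivisor, and (ii) any ring map `f : R → S` with `f π` a nonzerodivisor and
`⋂ₙ (f π)ⁿ S = 0` kills `Ī`, hence factors (uniquely) through `R/Ī`. -/
theorem stmt_15 {R : Type u} [CommRing R] (π : R)
    (I : Ideal R) (hI : ∀ x : R, x ∈ I ↔ ∃ k : ℕ, π ^ k * x = 0) :
    Ideal.Quotient.mk (⨅ n : ℕ, (I + Ideal.span {π ^ n})) π ∈
      nonZeroDivisors (R ⧸ ⨅ n : ℕ, (I + Ideal.span {π ^ n})) ∧
    ∀ (S : Type v) [CommRing S] (f : R →+* S),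
      f π ∈ nonZeroDivisors S →
      (⨅ n : ℕ, Ideal.span {f π ^ n}) = ⊥ →
      (⨅ n : ℕ, (I + Ideal.span {π ^ n})) ≤ RingHom.ker f := by
  have mem_closure : ∀ x : R, x ∈ (⨅ n : ℕ, (I + Ideal.span {π ^ n})) ↔
      ∀ n : ℕ, ∃ r : R, x - π ^ n * r ∈ I := by
    intro x
    rw [Ideal.mem_iInf]
    refine forall_congr' fun n => ?_
    rw [Ideal.add_eq_sup, Submodule.mem_sup]
    constructor
    · rintro ⟨i, hi, z, hz, rfl⟩
      obtain ⟨r, rfl⟩ := Ideal.mem_span_singleton'.1 hz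
      refine ⟨r, ?_⟩
      rwa [mul_comm r, add_sub_cancel_right]
    · rintro ⟨r, hr⟩
      exact ⟨_, hr, π ^ n * r, Ideal.mem_span_singleton.2 ⟨r, rfl⟩, sub_add_cancel _ _⟩
  refine ⟨?_, ?_⟩
  · rw [mem_nonZeroDivisors_iff_right]
    intro y hy
    obtain ⟨x, rfl⟩ := Ideal.Quotient.mk_surjective y
    rw [← map_mul, Ideal.Quotient.eq_zero_iff_mem, mem_closure] at hy
    rw [Ideal.Quotient.eq_zero_iff_mem, mem_closure]
    intro n
    -- One extra power of `π` is used, since dividing by `π` costs one.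
    obtain ⟨r, hr⟩ := hy (n + 1)
    obtain ⟨k, hk⟩ := (hI _).1 hr
    refine ⟨r, (hI _).2 ⟨k + 1, ?_⟩⟩
    rw [← hk]
    ring
  · intro S _ f hf hsep x hx
    rw [mem_closure] at hx
    rw [RingHom.mem_ker, ← Ideal.mem_bot, ← hsep, Ideal.mem_iInf]
    intro n
    obtain ⟨r, hr⟩ := hx n
    obtain ⟨k, hk⟩ := (hI _).1 hr
    have h0 : f (x - π ^ n * r) = 0 := by
      have h := congrArg f hk
      rw [map_mul, map_pow, map_zero] at h
      exact (mul_left_mem_nonZeroDivisors_eq_zero_iff (pow_mem hf k)).1 h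
    rw [map_sub, map_mul, map_pow, sub_eq_zero] at h0
    exact Ideal.mem_span_singleton.2 ⟨f r, h0⟩
end

section
/- Let A be a commutative local ring and π ∈ A a nonzerodivisor contained in the maximal ideal. Let N ≥ 0 and let I be a finitely generated ideal of A with π^N ∈ I. Then: (i) if the image of I in A/π^{N+1}A is a principal ideal, then I is principal; (ii) if I is principal, then any generator of I is a nonzerodivisor of A, so that I is free of rank one as an A-module. -/
/-!
(i) Lift a generator of the image of `I` to `a ∈ I`. Then `I ⊆ (a) + (π ^ (N + 1))`, and
`π ^ (N + 1) = π * π ^ N` lies in `𝔪 I`, so `I ⊆ (a) + 𝔪 I` and Nakayama's lemma gives `I = (a)`.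

(ii) If `I = (a)`, then `a` divides the nonzerodivisor `π ^ N`, hence is itself a nonzerodivisor,
and multiplication by `a` is an isomorphism from `A` onto `I`.
-/


/-- The local algebraic content of Lemma 1.27 of the paper. In a local ring `A` with `π` a
nonzerodivisor in the maximal ideal, a finitely generated ideal `I` containing `π^N` is
(i) principal as soon as its image modulo `π^(N+1)` is principal, and (ii) if `I` is principal
then any generator is a nonzerodivisor, so `I` is free of rank one as an `A`-module. -/
theorem stmt_16 {A : Type*} [CommRing A] [IsLocalRing A] (π : A)
    (hπ_mem : π ∈ IsLocalRing.maximalIdeal A) (hπ_reg : π ∈ nonZeroDivisors A)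
    (N : ℕ) (I : Ideal A) (hfg : I.FG) (hpow : π ^ N ∈ I) :
    ((Ideal.map (Ideal.Quotient.mk (Ideal.span {π ^ (N + 1)})) I).IsPrincipal →
      I.IsPrincipal) ∧
    (I.IsPrincipal →
      (∀ a : A, I = Ideal.span {a} → a ∈ nonZeroDivisors A) ∧
      Nonempty (A ≃ₗ[A] I)) := by
  refine ⟨fun h => ?_, fun h => ?_⟩
  · obtain ⟨b, hb⟩ := h
    have hb' : b ∈ Ideal.map (Ideal.Quotient.mk (Ideal.span {π ^ (N + 1)})) I := by
      rw [hb]; exact Submodule.mem_span_singleton_self b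
    obtain ⟨a, haI, rfl⟩ :=
      (Ideal.mem_map_iff_of_surjective _ Ideal.Quotient.mk_surjective).1 hb'
    have key : I ≤ Ideal.span {a} := by
      refine Submodule.le_of_le_smul_of_le_jacobson_bot hfg
        (IsLocalRing.maximalIdeal_le_jacobson _) fun x hx => ?_
      have hx' := Ideal.mem_map_of_mem (Ideal.Quotient.mk (Ideal.span {π ^ (N + 1)})) hx
      rw [hb, Submodule.mem_span_singleton] at hx'
      obtain ⟨c, hc⟩ := hx'
      obtain ⟨c, rfl⟩ := Ideal.Quotient.mk_surjective c
      rw [smul_eq_mul, ← map_mul, eq_comm, Ideal.Quotient.eq,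
        Ideal.mem_span_singleton'] at hc
      obtain ⟨d, hd⟩ := hc
      refine Submodule.mem_sup.2 ⟨c * a, Ideal.mem_span_singleton'.2 ⟨c, rfl⟩,
        π * (d * π ^ N), Submodule.smul_mem_smul hπ_mem (I.mul_mem_left d hpow), ?_⟩
      linear_combination hd
    exact ⟨a, le_antisymm key ((Ideal.span_singleton_le_iff_mem I).2 haI)⟩
  · have hreg : ∀ a : A, I = Ideal.span {a} → a ∈ nonZeroDivisors A := by
      rintro a rfl
      obtain ⟨c, hc⟩ := Ideal.mem_span_singleton'.1 hpow
      have := pow_mem hπ_reg N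
      rw [← hc] at this
      exact (mul_mem_nonZeroDivisors.1 this).2
    refine ⟨hreg, ?_⟩
    obtain ⟨a, ha⟩ := h
    have ha' := hreg a ha
    subst ha
    refine ⟨LinearEquiv.ofBijective ((LinearMap.toSpanSingleton A A a).codRestrict
      (Submodule.span A {a}) fun c => Submodule.mem_span_singleton.2 ⟨c, rfl⟩) ⟨?_, ?_⟩⟩
    · intro x y hxy
      exact (mul_cancel_right_mem_nonZeroDivisors ha').1 (congrArg Subtype.val hxy)
    · rintro ⟨x, hx⟩
      obtain ⟨c, hc⟩ := Submodule.mem_span_singleton.1 hx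
      exact ⟨c, Subtype.ext hc⟩
end

section
/- Let (I, ≤) be a nonempty directed set and let (X_i)_{i ∈ I} be an inverse system of topological spaces, with continuous transition maps φ_{ji} : X_j → X_i for j ≥ i satisfying φ_{ii} = id and φ_{ki} = φ_{ji} ∘ φ_{kj} for k ≥ j ≥ i. Assume each X_i is a spectral space and each φ_{ji} is quasicompact. Let X_∞ = {x ∈ ∏_i X_i | φ_{ji}(x_j) = x_i for all j ≥ i} with the subspace topology of the product, and let p_i : X_∞ → X_i be the projections. Then every quasicompact open subset of X_∞ is of the form p_i⁻¹(U) for some i ∈ I and some quasicompact open subset U ⊆ X_i. -/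
/-! Since the index set is directed, the preimages `p i ⁻¹' U` with `U` quasicompact open in a single
`X i` form a basis of the limit topology: finitely many coordinate conditions can be moved to one
common level, and the quasicompact opens are a basis there. Such sets are also closed under binary
unions, because transition maps pull quasicompact opens back to quasicompact opens, so two of them
can be compared at a common level. A quasicompact open `W` is covered by finitely many of them
contained in `W`, hence is one itself. `IsCompact.induction_on` carries out the covering argument,
applied to the property of `s` that some such set lies between `s` and `W`. -/

/-- The essential-surjectivity part of Proposition 3.3 of the paper: for a cofiltered inverse
system of spectral spaces with quasicompact transition maps, every quasicompact open subset of
the inverse limit is the preimage of a quasicompact open subset at some finite level. -/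
theorem stmt_17 {ι : Type*} [Preorder ι] [IsDirected ι (· ≤ ·)] [Nonempty ι]
    (X : ι → Type*) [∀ i, TopologicalSpace (X i)]
    -- each `X i` is spectral:
    (hqc : ∀ i, CompactSpace (X i)) (hsober : ∀ i, QuasiSober (X i))
    (ht0 : ∀ i, T0Space (X i))
    (hbasis : ∀ i, TopologicalSpace.IsTopologicalBasis
      {U : Set (X i) | IsOpen U ∧ IsCompact U})
    (hqsep : ∀ i, ∀ U V : Set (X i),
      IsOpen U → IsCompact U → IsOpen V → IsCompact V → IsCompact (U ∩ V))
    -- the transition maps `φ i j h : X j → X i` for `i ≤ j`: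
    (φ : ∀ i j, i ≤ j → X j → X i)
    (hcont : ∀ i j (h : i ≤ j), Continuous (φ i j h))
    (hid : ∀ i, φ i i le_rfl = id)
    (hcomp : ∀ i j k (hij : i ≤ j) (hjk : j ≤ k),
      φ i k (hij.trans hjk) = φ i j hij ∘ φ j k hjk)
    -- the transition maps are quasicompact:
    (hφqc : ∀ i j (h : i ≤ j) (U : Set (X i)),
      IsOpen U → IsCompact U → IsCompact (φ i j h ⁻¹' U))
    -- a quasicompact open subset of the inverse limit:
    (W : Set {x : ∀ i, X i // ∀ i j (h : i ≤ j), φ i j h (x j) = x i})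
    (hWopen : IsOpen W) (hWcomp : IsCompact W) :
    ∃ (i : ι) (U : Set (X i)), IsOpen U ∧ IsCompact U ∧
      W = (fun x : {x : ∀ i, X i // ∀ i j (h : i ≤ j), φ i j h (x j) = x i} =>
        x.1 i) ⁻¹' U := by
  suffices h : ∃ (i : ι) (U : Set (X i)), IsOpen U ∧ IsCompact U ∧
      W ⊆ (fun x : {x : ∀ i, X i // ∀ i j (h : i ≤ j), φ i j h (x j) = x i} => x.1 i) ⁻¹' U ∧
      (fun x : {x : ∀ i, X i // ∀ i j (h : i ≤ j), φ i j h (x j) = x i} => x.1 i) ⁻¹' U ⊆ W by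
    obtain ⟨i, U, hU, hUc, h₁, h₂⟩ := h
    exact ⟨i, U, hU, hUc, h₁.antisymm h₂⟩
  refine hWcomp.induction_on (p := fun s => ∃ (i : ι) (U : Set (X i)), IsOpen U ∧ IsCompact U ∧
      s ⊆ (fun x : {x : ∀ i, X i // ∀ i j (h : i ≤ j), φ i j h (x j) = x i} => x.1 i) ⁻¹' U ∧
      (fun x : {x : ∀ i, X i // ∀ i j (h : i ≤ j), φ i j h (x j) = x i} => x.1 i) ⁻¹' U ⊆ W)
    ?_ ?_ ?_ ?_
  · obtain ⟨i⟩ := ‹Nonempty ι›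
    exact ⟨i, ∅, isOpen_empty, isCompact_empty, by simp, by simp⟩
  · rintro s t hst ⟨i, U, hU, hUc, h₁, h₂⟩
    exact ⟨i, U, hU, hUc, hst.trans h₁, h₂⟩
  · rintro s t ⟨i, U, hU, hUc, hs, hUW⟩ ⟨j, V, hV, hVc, ht, hVW⟩
    obtain ⟨k, hik, hjk⟩ := exists_ge_ge i j
    refine ⟨k, φ i k hik ⁻¹' U ∪ φ j k hjk ⁻¹' V,
      (hU.preimage (hcont i k hik)).union (hV.preimage (hcont j k hjk)),
      (hφqc i k hik U hU hUc).union (hφqc j k hjk V hV hVc), ?_, ?_⟩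
    · rintro x (hx | hx)
      · left
        simpa only [Set.mem_preimage, x.2] using hs hx
      · right
        simpa only [Set.mem_preimage, x.2] using ht hx
    · rintro x (hx | hx)
      · exact hUW (by simpa only [Set.mem_preimage, x.2] using hx)
      · exact hVW (by simpa only [Set.mem_preimage, x.2] using hx)
  · intro x hx
    obtain ⟨V, hV, rfl⟩ := isOpen_induced_iff.mp hWopen
    obtain ⟨F, u, hu, hFu⟩ := isOpen_pi_iff.mp hV x.1 hx
    obtain ⟨j, hj⟩ := F.exists_le
    -- The coordinate conditions `y a ∈ u a` for `a ∈ F`, all pulled back to level `j`.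
    have hO : IsOpen (⋂ a : F, φ a j (hj a a.2) ⁻¹' u a) :=
      isOpen_iInter_of_finite fun a => (hu a a.2).1.preimage (hcont _ _ _)
    have hxO : x.1 j ∈ ⋂ a : F, φ a j (hj a a.2) ⁻¹' u a := by
      refine Set.mem_iInter.mpr fun a => ?_
      simpa only [Set.mem_preimage, x.2] using (hu a a.2).2
    obtain ⟨U, ⟨hU, hUc⟩, hxU, hUO⟩ := (hbasis j).exists_subset_of_mem_open hxO hO
    refine ⟨_, mem_nhdsWithin_of_mem_nhds
      ((hU.preimage ((continuous_apply j).comp continuous_subtype_val)).mem_nhds hxU),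
      j, U, hU, hUc, subset_rfl, fun y hy => hFu fun a ha => ?_⟩
    simpa only [Set.mem_preimage, y.2] using Set.mem_iInter.mp (hUO hy) ⟨a, ha⟩
end

section
/- Let (I, ≤) be a nonempty directed set and let (X_i)_{i ∈ I} be an inverse system of topological spaces, with continuous transition maps φ_{ji} : X_j → X_i for j ≥ i satisfying φ_{ii} = id and φ_{ki} = φ_{ji} ∘ φ_{kj} for k ≥ j ≥ i. Assume each X_i is a spectral space and each φ_{ji} is quasicompact. Let X_∞ = {x ∈ ∏_i X_i | φ_{ji}(x_j) = x_i for all j ≥ i} with the subspace topology of the product, and let p_i : X_∞ → X_i be the projections. If i ∈ I and U, V ⊆ X_i are quasicompact open subsets with p_i⁻¹(U) ⊆ p_i⁻¹(V), then there exists j ≥ i such that φ_{ji}⁻¹(U) ⊆ φ_{ji}⁻¹(V). -/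
/-!
The proof takes a limit along an ultrafilter. If the claim fails, every `j ≥ i` carries a point
`y j` of `X j` with `φ i j (y j) ∈ U \ V`. Fix an ultrafilter `F` on the index set finer than
`atTop`. For each `k` the points `φ k j (y j)`, defined for all large `j`, form an `F`-indexed family
in `X k`. Compactness of the constructible topology of `X k` gives a point `x k` that lies in a
compact open set `W` if and only if `φ k j (y j) ∈ W` for `F`-almost all `j`
(`exists_mem_iff_mem_ultrafilter`). Preimages of compact opens under the transition maps are compact
open, and compact opens separate the points of a T0 space with a basis of compact opens, so the
points `x k` are compatible with the transition maps. The resulting point of the inverse limit has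
`x i ∈ U` and `x i ∉ V`, contradicting the hypothesis.
-/

open Filter Topology

/-- Ultrafilters on a spectral space converge in the constructible topology: some point lies in
exactly those compact open sets that belong to the ultrafilter. The T0 axiom, which would make the
point unique, is not needed for existence. -/
theorem exists_mem_iff_mem_ultrafilter {X : Type*} [TopologicalSpace X] [CompactSpace X]
    [QuasiSober X] [PrespectralSpace X] [QuasiSeparatedSpace X] (F : Ultrafilter X) :
    ∃ x : X, ∀ W : Set X, IsOpen W → IsCompact W → (x ∈ W ↔ W ∈ F) := by
  let t := WithTopology.toTopology (constructibleTopology X)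
  let o := WithTopology.ofTopology (t := constructibleTopology X)
  obtain ⟨z, -, hz⟩ := isCompact_univ.ultrafilter_le_nhds (F.map t) (by simp)
  -- Applied both to a compact open set and to its complement, which is constructibly open as well.
  have key : ∀ W : Set X, IsOpen[constructibleTopology X] W → o z ∈ W → W ∈ F := by
    intro W hW hzW
    have hopen : IsOpen (o ⁻¹' W) := WithConstructibleTopology.isOpen_iff.2 hW
    exact hz (hopen.mem_nhds hzW)
  refine ⟨o z, fun W hWo hWc => ⟨key W (hWc.isOpen_constructibleTopology_of_isOpen hWo), ?_⟩⟩
  intro hW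
  by_contra hzW
  have hWcompl : Wᶜ ∈ F := key Wᶜ (IsCompact.isOpen_constructibleTopology_of_isClosed
    (by rwa [compl_compl]) hWo.isClosed_compl) hzW
  exact Ultrafilter.compl_mem_iff_notMem.1 hWcompl hW

/-- The full-faithfulness part of Proposition 3.3 of the paper: for a cofiltered inverse system
of spectral spaces with quasicompact transition maps, if the preimages in the inverse limit of two
quasicompact open subsets `U, V ⊆ X i` satisfy `p i ⁻¹' U ⊆ p i ⁻¹' V`, then
`φ j i ⁻¹' U ⊆ φ j i ⁻¹' V` already at some finite level `j ≥ i`. -/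
theorem stmt_18 {ι : Type*} [Preorder ι] [IsDirected ι (· ≤ ·)] [Nonempty ι]
    (X : ι → Type*) [∀ i, TopologicalSpace (X i)]
    -- each `X i` is spectral:
    (hqc : ∀ i, CompactSpace (X i)) (hsober : ∀ i, QuasiSober (X i))
    (ht0 : ∀ i, T0Space (X i))
    (hbasis : ∀ i, TopologicalSpace.IsTopologicalBasis
      {U : Set (X i) | IsOpen U ∧ IsCompact U})
    (hqsep : ∀ i, ∀ U V : Set (X i),
      IsOpen U → IsCompact U → IsOpen V → IsCompact V → IsCompact (U ∩ V))
    -- the transition maps `φ i j h : X j → X i` for `i ≤ j`: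
    (φ : ∀ i j, i ≤ j → X j → X i)
    (hcont : ∀ i j (h : i ≤ j), Continuous (φ i j h))
    (hid : ∀ i, φ i i le_rfl = id)
    (hcomp : ∀ i j k (hij : i ≤ j) (hjk : j ≤ k),
      φ i k (hij.trans hjk) = φ i j hij ∘ φ j k hjk)
    -- the transition maps are quasicompact:
    (hφqc : ∀ i j (h : i ≤ j) (U : Set (X i)),
      IsOpen U → IsCompact U → IsCompact (φ i j h ⁻¹' U))
    (i : ι) (U V : Set (X i))
    (hUopen : IsOpen U) (hUcomp : IsCompact U)
    (hVopen : IsOpen V) (hVcomp : IsCompact V)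
    (hUV : ((fun x : {x : ∀ i, X i // ∀ i j (h : i ≤ j), φ i j h (x j) = x i} =>
        x.1 i) ⁻¹' U) ⊆
      ((fun x : {x : ∀ i, X i // ∀ i j (h : i ≤ j), φ i j h (x j) = x i} =>
        x.1 i) ⁻¹' V)) :
    ∃ (j : ι) (h : i ≤ j), (φ i j h ⁻¹' U) ⊆ (φ i j h ⁻¹' V) := by
  classical
  have hpre : ∀ k, PrespectralSpace (X k) := fun k => ⟨hbasis k⟩
  have hqs : ∀ k, QuasiSeparatedSpace (X k) := fun k =>
    ⟨fun A B hA hA' hB hB' => hqsep k A B hA hA' hB hB'⟩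
  by_contra! hcon
  have hex : ∀ j (h : i ≤ j), ∃ y : X j, φ i j h y ∈ U ∧ φ i j h y ∉ V :=
    fun j h => Set.not_subset.1 (hcon j h)
  choose y hyU hyV using hex
  have hne : ∀ k, Nonempty (X k) := fun k =>
    let ⟨j, hij, hkj⟩ := exists_ge_ge i k
    ⟨φ k j hkj (y j hij)⟩
  -- `z k j` is the image of `y j` in `X k`, with an arbitrary value if `j` is not large enough.
  let z : ∀ k, ι → X k := fun k j =>
    if h : i ≤ j ∧ k ≤ j then φ k j h.2 (y j h.1) else Classical.arbitrary (X k)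
  have hz : ∀ k j (hij : i ≤ j) (hkj : k ≤ j), z k j = φ k j hkj (y j hij) :=
    fun k j hij hkj => dif_pos ⟨hij, hkj⟩
  let F : Ultrafilter ι := Ultrafilter.of atTop
  have hF : ∀ k, ∀ᶠ j in (F : Filter ι), k ≤ j := fun k =>
    Ultrafilter.of_le atTop (eventually_ge_atTop k)
  choose x hx using fun k => exists_mem_iff_mem_ultrafilter (F.map (z k))
  have hx' : ∀ k (W : Set (X k)), IsOpen W → IsCompact W →
      (x k ∈ W ↔ ∀ᶠ j in (F : Filter ι), z k j ∈ W) := hx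
  have hcompat : ∀ k l (h : k ≤ l), φ k l h (x l) = x k := by
    intro k l h
    have := ht0 k
    refine ((hbasis k).inseparable_iff.2 ?_).eq
    rintro W ⟨hWo, hWc⟩
    rw [hx' k W hWo hWc, ← Set.mem_preimage,
      hx' l _ (hWo.preimage (hcont k l h)) (hφqc k l h W hWo hWc)]
    refine eventually_congr ?_
    filter_upwards [hF i, hF l] with j hij hlj
    rw [hz k j hij (h.trans hlj), hz l j hij hlj, hcomp k l j h hlj]
    rfl
  have hxU : x i ∈ U := by
    rw [hx' i U hUopen hUcomp]
    filter_upwards [hF i] with j hij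
    rw [hz i j hij hij]
    exact hyU j hij
  have hxV : x i ∈ V := hUV (a := ⟨x, hcompat⟩) hxU
  rw [hx' i V hVopen hVcomp] at hxV
  obtain ⟨j, hjV, hij⟩ := (hxV.and (hF i)).exists
  rw [hz i j hij hij] at hjV
  exact hyV j hij hjV
end
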